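/- arXiv:2001.04517 — 2 statements merged into one kernel-verified Lean document; each statement's English description precedes it below -/
import Mathlib

section
/- There is an absolute constant c > 0 such that for every integer t ≥ 1, every graph G with no K_t minor, and every ball hypergraph 𝓗 of G, the fractional matching number satisfies ν*(𝓗) ≤ c·t·√(log t)·ν(𝓗). -/
/-- The ball of radius `r` centered at `v` in the graph metric of `G`:
all vertices `u` with `d_G(v,u) ≤ r` (in particular, `u` must be reachable from `v`). -/
def SimpleGraph.gBall {V : Type*} (G : SimpleGraph V) (v : V) (r : ℕ) : Set V :=
  {u | G.Reachable v u ∧ G.dist v u ≤ r}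

/-- A ball hypergraph of `G` is given by its edge set `E`: a collection of subsets of
`V(G)`, each of which is a ball of `G`. -/
def IsBallHypergraph {V : Type*} (G : SimpleGraph V) (E : Set (Set V)) : Prop :=
  ∀ e ∈ E, ∃ v r, e = G.gBall v r

/-- `H` is a minor of `G`: there are pairwise disjoint connected nonempty branch sets
in `G`, one for each vertex of `H`, with an edge of `G` between the branch sets of any
two adjacent vertices of `H`. -/
def GraphMinor {W : Type*} {V : Type*} (H : SimpleGraph W) (G : SimpleGraph V) : Prop :=
  ∃ f : W → Set V,
    (∀ w, (G.induce (f w)).Connected) ∧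
    (Pairwise fun w₁ w₂ => Disjoint (f w₁) (f w₂)) ∧
    (∀ w₁ w₂, H.Adj w₁ w₂ → ∃ u ∈ f w₁, ∃ v ∈ f w₂, G.Adj u v)

/-- The matching number of the hypergraph with edge set `E`: the maximum number of
pairwise disjoint edges. -/
noncomputable def matchingNumber {V : Type*} [Fintype V] (E : Set (Set V)) : ℕ :=
  sSup {n | ∃ M : Finset (Set V), ↑M ⊆ E ∧ (M : Set (Set V)).Pairwise Disjoint ∧ M.card = n}

/-- The transversal number of the hypergraph with edge set `E`: the minimum size of a
set of vertices meeting every edge. -/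
noncomputable def transversalNumber {V : Type*} [Fintype V] (E : Set (Set V)) : ℕ :=
  sInf {n | ∃ T : Finset V, (∀ e ∈ E, ∃ v ∈ T, v ∈ e) ∧ T.card = n}


/-- `w` is a fractional matching of the hypergraph with edge set `E`: nonnegative
weights on the edges (zero outside `E`) such that for every vertex, the total weight
of the edges containing it is at most `1`. -/
def IsFractionalMatching {V : Type*} [Fintype V] (E : Set (Set V)) (w : Set V → ℝ) :
    Prop :=
  (∀ e, 0 ≤ w e) ∧ (∀ e, e ∉ E → w e = 0) ∧
    ∀ v : V, ∑ e : Set V, Set.indicator {e : Set V | v ∈ e} w e ≤ 1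

/-! Let `w` be a fractional matching. Sample every ball `e` independently with probability
`w e / 2`. A point common to two sampled balls lies in no further sampled ball with probability at
least `1 / 2`, so pairs of intersecting balls of large total weight would yield a subfamily with
many pairs of balls meeting in a point private to the pair. The Voronoi cells of the balls of such a
subfamily turn these pairs into the edges of a minor of `G`, and a `K_t`-minor-free graph on `n`
vertices has only `O(t √(log t) n)` edges. Hence the weighted intersection graph of the balls has
small average degree, and a greedy choice gives many pairwise disjoint balls.

For the bound on the number of edges, a critical minor contains a set `M` of `Ω(t √(log t))`
vertices in which every vertex has about half of `M` as neighbours. With `r` of order `√(log t)`,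
choose `t` disjoint connected sets of `O(r)` vertices in `M` one at a time, each dominating all
but a fraction `exp (-Ω(r))` of `M`: a random set of `3 r` vertices lies inside the undominated
part of a given earlier set with probability `exp (-Ω(r ^ 2))`, less than `1 / t`, so it can be
adjacent to all the earlier sets at once, and it is then connected through short paths. -/

open Finset

universe u

section Connectivity

variable {V W : Type*} {G : SimpleGraph V} {H : SimpleGraph W} {s t : Set V} {u v w : V}

/-- There is a walk of `G` from `u` to `v` whose vertices, except possibly `u`, all lie in `s`. -/
def ReachableWithin (G : SimpleGraph V) (s : Set V) (u v : V) : Prop :=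
  Relation.ReflTransGen (fun a b => G.Adj a b ∧ b ∈ s) u v

theorem ReachableWithin.refl (u : V) : ReachableWithin G s u u :=
  Relation.ReflTransGen.refl

theorem ReachableWithin.trans (huv : ReachableWithin G s u v) (hvw : ReachableWithin G s v w) :
    ReachableWithin G s u w :=
  Relation.ReflTransGen.trans huv hvw

theorem ReachableWithin.tail (huv : ReachableWithin G s u v) (hvw : G.Adj v w) (hw : w ∈ s) :
    ReachableWithin G s u w :=
  Relation.ReflTransGen.tail huv ⟨hvw, hw⟩

theorem ReachableWithin.mono (hst : s ⊆ t) (h : ReachableWithin G s u v) :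
    ReachableWithin G t u v :=
  h.lift id fun _ _ hab => ⟨hab.1, hst hab.2⟩

theorem connected_induce_iff_forall_reachableWithin (hu : u ∈ s) :
    (G.induce s).Connected ↔ ∀ v ∈ s, ReachableWithin G s u v := by
  refine ⟨fun h v hv => ?_, fun h => ?_⟩
  · have huv := h.preconnected ⟨u, hu⟩ ⟨v, hv⟩
    rw [SimpleGraph.reachable_iff_reflTransGen] at huv
    exact huv.lift Subtype.val fun a b hab => ⟨hab, b.2⟩
  · have lift : ∀ v, ReachableWithin G s u v →
        ∃ hv : v ∈ s, (G.induce s).Reachable ⟨u, hu⟩ ⟨v, hv⟩ := by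
      intro v hv
      induction hv with
      | refl => exact ⟨hu, SimpleGraph.Reachable.refl _⟩
      | tail _ hbc ih =>
        obtain ⟨hb, hr⟩ := ih
        exact ⟨hbc.2, hr.trans (SimpleGraph.Adj.reachable (by simpa using hbc.1))⟩
    rw [SimpleGraph.connected_iff_exists_forall_reachable]
    exact ⟨⟨u, hu⟩, fun v => (lift v (h v v.2)).2⟩

theorem connected_induce_singleton (G : SimpleGraph V) (v : V) : (G.induce {v}).Connected :=
  (connected_induce_iff_forall_reachableWithin (Set.mem_singleton v)).2
    fun _ hx => Set.mem_singleton_iff.1 hx ▸ .refl _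

theorem connected_induce_biUnion {I : Set W} {f : W → Set V} (hI : (H.induce I).Connected)
    (hf : ∀ i ∈ I, (G.induce (f i)).Connected)
    (hadj : ∀ i ∈ I, ∀ j ∈ I, H.Adj i j → ∃ a ∈ f i, ∃ b ∈ f j, G.Adj a b) :
    (G.induce (⋃ i ∈ I, f i)).Connected := by
  obtain ⟨i₀, hi₀⟩ := hI.nonempty
  obtain ⟨a₀, ha₀⟩ := (hf i₀ hi₀).nonempty
  have within : ∀ i ∈ I, ∀ a ∈ f i, ∀ b ∈ f i, ReachableWithin G (⋃ i ∈ I, f i) a b :=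
    fun i hi a ha b hb => ((connected_induce_iff_forall_reachableWithin ha).1 (hf i hi) b hb).mono
      (Set.subset_biUnion_of_mem hi)
  have reach : ∀ i, ReachableWithin H I i₀ i →
      i ∈ I ∧ ∀ a ∈ f i, ReachableWithin G (⋃ i ∈ I, f i) a₀ a := by
    intro i hi
    induction hi with
    | refl => exact ⟨hi₀, within i₀ hi₀ a₀ ha₀⟩
    | tail _ hij ih =>
      refine ⟨hij.2, fun c hc => ?_⟩
      obtain ⟨a, ha, b, hb, hab⟩ := hadj _ ih.1 _ hij.2 hij.1
      exact ((ih.2 a ha).tail hab (Set.mem_biUnion hij.2 hb)).trans (within _ hij.2 b hb c hc)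
  refine (connected_induce_iff_forall_reachableWithin (Set.mem_biUnion hi₀ ha₀)).2 fun a ha => ?_
  obtain ⟨i, hi, hai⟩ := Set.mem_iUnion₂.1 ha
  exact (reach i ((connected_induce_iff_forall_reachableWithin hi₀).1 hI i hi)).2 a hai

end Connectivity

section Minors

variable {V W X : Type*} {G : SimpleGraph V} {H : SimpleGraph W} {K : SimpleGraph X}

theorem GraphMinor.refl (G : SimpleGraph V) : GraphMinor G G :=
  ⟨fun v => {v}, connected_induce_singleton G, fun _ _ h => by simpa using h,
    fun v w h => ⟨v, rfl, w, rfl, h⟩⟩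

theorem GraphMinor.of_subsingleton [Subsingleton W] (H : SimpleGraph W) (G : SimpleGraph V)
    (h : Nonempty W → Nonempty V) : GraphMinor H G :=
  ⟨fun w => {(h ⟨w⟩).some}, fun _ => connected_induce_singleton G _,
    fun _ _ h => (h (Subsingleton.elim _ _)).elim, fun _ _ h => (h.ne (Subsingleton.elim _ _)).elim⟩

theorem GraphMinor.trans (hKH : GraphMinor K H) (hHG : GraphMinor H G) : GraphMinor K G := by
  obtain ⟨g, gconn, gdisj, gadj⟩ := hKH
  obtain ⟨f, fconn, fdisj, fadj⟩ := hHG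
  refine ⟨fun x => ⋃ w ∈ g x, f w, fun x => ?_, fun x y hxy => ?_, fun x y hxy => ?_⟩
  · exact connected_induce_biUnion (gconn x) (fun w _ => fconn w) fun w _ w' _ => fadj w w'
  · simp only [Set.disjoint_iUnion_left, Set.disjoint_iUnion_right]
    exact fun w hw w' hw' => fdisj ((gdisj hxy).ne_of_mem hw' hw)
  · obtain ⟨w, hw, w', hw', hadj⟩ := gadj x y hxy
    obtain ⟨a, ha, b, hb, hab⟩ := fadj w w' hadj
    exact ⟨a, Set.mem_biUnion hw ha, b, Set.mem_biUnion hw' hb, hab⟩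

theorem GraphMinor.induce (G : SimpleGraph V) (s : Set V) : GraphMinor (G.induce s) G :=
  ⟨fun v => {v.1}, fun v => connected_induce_singleton G v,
    fun v w h => by simpa [Subtype.ext_iff] using h, fun v w h => ⟨v, rfl, w, rfl, h⟩⟩

/-- The graph obtained from `G` by contracting the edge `uv` to the vertex `u`. -/
def contractEdge (G : SimpleGraph V) (u v : V) : SimpleGraph ({v}ᶜ : Set V) where
  Adj x y := x ≠ y ∧ (G.Adj x y ∨ (x = u ∧ G.Adj v y) ∨ (y = u ∧ G.Adj v x))
  symm := ⟨fun _ _ h => ⟨h.1.symm, h.2.imp SimpleGraph.Adj.symm Or.symm⟩⟩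
  loopless := ⟨fun _ h => h.1 rfl⟩

theorem GraphMinor.contractEdge {u v : V} (huv : G.Adj u v) :
    GraphMinor (contractEdge G u v) G := by
  refine ⟨fun x => {z | z = x ∨ (x = u ∧ z = v)}, fun x => ?_, fun x y hxy => ?_, ?_⟩
  · refine (connected_induce_iff_forall_reachableWithin (u := x.1) (Or.inl rfl)).2 ?_
    rintro z (rfl | ⟨hx, rfl⟩)
    · exact .refl _
    · exact (ReachableWithin.refl _).tail (hx ▸ huv) (Or.inr ⟨hx, rfl⟩)
  · refine Set.disjoint_left.2 ?_
    have hne : x.1 ≠ y.1 := Subtype.coe_ne_coe.2 hxy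
    rintro z (rfl | ⟨hx, rfl⟩) (h | ⟨hy, h⟩)
    · exact hne h
    · exact x.2 h
    · exact y.2 h.symm
    · exact hne (hx.trans hy.symm)
  · rintro x y ⟨-, h | ⟨hx, h⟩ | ⟨hy, h⟩⟩
    · exact ⟨x, Or.inl rfl, y, Or.inl rfl, h⟩
    · exact ⟨v, Or.inr ⟨hx, rfl⟩, y, Or.inl rfl, h⟩
    · exact ⟨x, Or.inl rfl, v, Or.inr ⟨hy, rfl⟩, h.symm⟩

theorem GraphMinor.top_of_pairwise {F : Finset (Finset V)}
    (hconn : ∀ s ∈ F, (G.induce (s : Set V)).Connected)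
    (hF : (F : Set (Finset V)).Pairwise fun s t => Disjoint s t ∧ ∃ a ∈ s, ∃ b ∈ t, G.Adj a b) :
    GraphMinor (⊤ : SimpleGraph (Fin #F)) G := by
  have touch : ∀ i j : Fin #F, i ≠ j → _ := fun i j hij =>
    hF (F.equivFin.symm i).2 (F.equivFin.symm j).2
      (Subtype.coe_ne_coe.2 (F.equivFin.symm.injective.ne hij))
  exact ⟨fun i => (F.equivFin.symm i).1, fun i => hconn _ (F.equivFin.symm i).2,
    fun i j hij => disjoint_coe.2 (touch i j hij).1, fun i j hij => (touch i j hij.ne).2⟩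

end Minors

section EdgeDensity

variable {V : Type u} [Fintype V]

open Classical in
theorem card_edgeFinset_eq_induce_compl_singleton_add (G : SimpleGraph V) (v : V) :
    #G.edgeFinset = #(G.induce {v}ᶜ).edgeFinset + G.degree v := by
  rw [G.card_edgeFinset_induce_compl_singleton, G.card_edgeFinset_deleteIncidenceSet,
    Nat.sub_add_cancel (G.degree_le_card_edgeFinset v)]

open Classical in
theorem card_edgeFinset_le_contractEdge {G : SimpleGraph V} {u v : V} (huv : G.Adj u v) :
    #G.edgeFinset ≤ #(contractEdge G u v).edgeFinset +
      (#(G.neighborFinset u ∩ G.neighborFinset v) + 1) := by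
  let u' : ({v}ᶜ : Set V) := ⟨u, huv.ne⟩
  let P : Finset ({v}ᶜ : Set V) := univ.filter fun y => G.Adj v y ∧ ¬ G.Adj u y ∧ u ≠ y
  have hdeg : G.degree v ≤ #P + (#(G.neighborFinset u ∩ G.neighborFinset v) + 1) := by
    have hsub : G.neighborFinset v ⊆ P.map (.subtype _) ∪
        insert u (G.neighborFinset u ∩ G.neighborFinset v) := by
      intro y hy
      rw [SimpleGraph.mem_neighborFinset] at hy
      by_cases hyu : u = y
      · simp [hyu]
      · by_cases hadj : G.Adj u y
        · simp [hadj, hy]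
        · simp [P, hadj, hy, hyu, hy.ne']
    rw [← SimpleGraph.card_neighborFinset_eq_degree]
    calc _ ≤ _ := card_le_card hsub
      _ ≤ _ := card_union_le _ _
      _ ≤ _ := by grw [card_map, card_insert_le]
  have hedges : #(G.induce {v}ᶜ).edgeFinset + #P ≤ #(contractEdge G u v).edgeFinset := by
    have hdisj : Disjoint (G.induce {v}ᶜ).edgeFinset (P.image fun y => s(u', y)) := by
      rw [disjoint_right]
      rintro _ he
      obtain ⟨y, hy, rfl⟩ := mem_image.1 he
      simpa [u'] using (mem_filter.1 hy).2.2.1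
    rw [← card_image_of_injective P fun y z h => Sym2.congr_right.1 h,
      ← card_union_of_disjoint hdisj]
    refine card_le_card (union_subset (SimpleGraph.edgeFinset_mono fun x y h =>
      ⟨h.ne, Or.inl h⟩) (image_subset_iff.2 fun y hy => ?_))
    obtain ⟨hvy, -, huy⟩ := (mem_filter.1 hy).2
    exact SimpleGraph.mem_edgeFinset.2 ⟨Subtype.coe_ne_coe.1 huy, Or.inr (Or.inl ⟨rfl, hvy⟩)⟩
  rw [card_edgeFinset_eq_induce_compl_singleton_add G v]
  omega

open Classical in
theorem one_lt_card_of_card_edgeFinset_pos {G : SimpleGraph V} (h : 0 < #G.edgeFinset) :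
    1 < Fintype.card V :=
  not_le.1 fun hle => (h.trans_le G.card_edgeFinset_le_card_choose_two).ne'
    (Nat.choose_eq_zero_of_lt (Nat.lt_succ_of_le hle))

theorem mul_lt_of_mul_add_one_le {k n e e' l : ℕ} (hn : 0 < n) (he : k * (n + 1) < e)
    (hl : l * (n + 1) ≤ e) (hle : e ≤ e' + l) : k * n < e' := by
  rcases le_or_gt l k with hlk | hkl <;> nlinarith

open Classical in
/-- `G` is density critical if deleting any vertex and contracting any edge (which removes the edge
itself and one edge for every common neighbour of its ends) destroys more than the average number
`|E(G)| / |V(G)|` of edges per vertex, and so decreases the density. -/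
def IsDensityCritical (G : SimpleGraph V) : Prop :=
  (∀ v, #G.edgeFinset < G.degree v * Fintype.card V) ∧
    ∀ u v, G.Adj u v →
      #G.edgeFinset < (#(G.neighborFinset u ∩ G.neighborFinset v) + 1) * Fintype.card V

open Classical in
theorem exists_isDensityCritical_minor {k : ℕ} (G : SimpleGraph V)
    (hdense : k * Fintype.card V < #G.edgeFinset) :
    ∃ (W : Type u) (_ : Fintype W) (H : SimpleGraph W), GraphMinor H G ∧
      k * Fintype.card W < #H.edgeFinset ∧ IsDensityCritical H := by
  induction hcard : Fintype.card V generalizing V with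
  | zero =>
    have := one_lt_card_of_card_edgeFinset_pos (pos_of_gt hdense)
    omega
  | succ n ih =>
    have descend : ∀ (v : V) (G' : SimpleGraph ({v}ᶜ : Set V)) (l : ℕ), GraphMinor G' G →
        l * (n + 1) ≤ #G.edgeFinset → #G.edgeFinset ≤ #G'.edgeFinset + l →
        ∃ (W : Type u) (_ : Fintype W) (H : SimpleGraph W), GraphMinor H G ∧
          k * Fintype.card W < #H.edgeFinset ∧ IsDensityCritical H := by
      intro v G' l hG' hl hle
      have hcard' : Fintype.card ({v}ᶜ : Set V) = n := by
        rw [Fintype.card_compl_set, hcard, Fintype.card_unique, Nat.add_sub_cancel]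
      have hdense' : k * Fintype.card ({v}ᶜ : Set V) < #G'.edgeFinset := by
        have hV := one_lt_card_of_card_edgeFinset_pos (pos_of_gt hdense)
        rw [hcard] at hdense hV
        rw [hcard']
        exact mul_lt_of_mul_add_one_le (Nat.succ_lt_succ_iff.1 hV) hdense hl hle
      obtain ⟨W, hW, H, hHG', hH⟩ := ih G' hdense' hcard'
      exact ⟨W, hW, H, hHG'.trans hG', hH⟩
    by_cases hdel : ∃ v, G.degree v * (n + 1) ≤ #G.edgeFinset
    · obtain ⟨v, hv⟩ := hdel
      exact descend v _ _ (.induce G _) hv (card_edgeFinset_eq_induce_compl_singleton_add G v).le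
    by_cases hcontr : ∃ u v, G.Adj u v ∧
        (#(G.neighborFinset u ∩ G.neighborFinset v) + 1) * (n + 1) ≤ #G.edgeFinset
    · obtain ⟨u, v, huv, hle⟩ := hcontr
      exact descend v _ _ (.contractEdge huv) hle (card_edgeFinset_le_contractEdge huv)
    push Not at hdel hcontr
    rw [← hcard] at hdel hcontr
    exact ⟨V, inferInstance, G, .refl G, hdense, hdel, hcontr⟩

open Classical in
/-- A vertex of at most average degree in a critical minor has a dense neighbourhood. -/
theorem exists_minor_with_dense_neighborFinset {k : ℕ} (G : SimpleGraph V)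
    (hdense : k * Fintype.card V < #G.edgeFinset) :
    ∃ (W : Type u) (H : SimpleGraph W) (M : Finset W), GraphMinor H G ∧
      k ≤ #M ∧ ∀ x ∈ M, #M ≤ 2 * #(M.filter (H.Adj x)) + 2 := by
  obtain ⟨W, _, H, hHG, hk, hdeg, hcodeg⟩ := exists_isDensityCritical_minor G hdense
  have : Nonempty W := Fintype.card_pos_iff.1
    (pos_of_gt (one_lt_card_of_card_edgeFinset_pos (pos_of_gt hk)))
  obtain ⟨v, -, hv⟩ : ∃ v ∈ univ, H.degree v * Fintype.card W ≤ 2 * #H.edgeFinset := by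
    refine exists_le_of_sum_le univ_nonempty ?_
    rw [← sum_mul, H.sum_degrees_eq_twice_card_edges, sum_const, card_univ, smul_eq_mul, mul_comm]
  refine ⟨W, H, H.neighborFinset v, hHG, ?_, fun x hx => ?_⟩ <;>
    rw [SimpleGraph.card_neighborFinset_eq_degree]
  · exact (lt_of_mul_lt_mul_right (hk.trans (hdeg v)) (Nat.zero_le _)).le
  · have hcommon : (H.neighborFinset v).filter (H.Adj x) =
        H.neighborFinset x ∩ H.neighborFinset v := by
      ext z
      simp [and_comm]
    have hlt := hcodeg x v ((H.mem_neighborFinset v x).1 hx).symm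
    rw [hcommon]
    refine (lt_of_mul_lt_mul_right (a := Fintype.card W) ?_ (Nat.zero_le _)).le
    linarith

end EdgeDensity

section Counting

theorem exists_finset_card_eq_pairwise {α : Type*} {P : α → Prop} {r : α → α → Prop} {t : ℕ}
    [Std.Symm r] (h : ∀ s : Finset α, #s < t → (∀ x ∈ s, P x) →
      ∃ y ∉ s, P y ∧ ∀ x ∈ s, r y x) :
    ∃ s : Finset α, #s = t ∧ (∀ x ∈ s, P x) ∧ (s : Set α).Pairwise r := by
  classical
  induction t with
  | zero => exact ⟨∅, by simp⟩
  | succ t ih =>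
    obtain ⟨s, hst, hsP, hsr⟩ := ih fun s hs => h s (hs.trans t.lt_succ_self)
    obtain ⟨y, hys, hyP, hyr⟩ := h s (hst ▸ t.lt_succ_self) hsP
    refine ⟨insert y s, by rw [card_insert_of_notMem hys, hst], ?_, ?_⟩
    · exact (forall_mem_insert _ _ _).2 ⟨hyP, hsP⟩
    · rw [coe_insert, Set.pairwise_insert_of_symm]
      exact ⟨hsr, fun x hx _ => hyr x hx⟩

theorem exists_mem_notMem_le_two_mul {α : Type*} {s B : Finset α} {f : α → ℝ} {c : ℝ}
    (hf : ∀ x ∈ s, 0 ≤ f x) (hsum : ∑ x ∈ s, f x ≤ c * #s) (hB : (#B : ℝ) < 1 / 2 * #s) :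
    ∃ x ∈ s, x ∉ B ∧ f x ≤ 2 * c := by
  classical
  by_contra! h
  have hs : (0 : ℝ) < #s := by linarith [(#B).cast_nonneg (α := ℝ)]
  have hc : 0 ≤ c := nonneg_of_mul_nonneg_left ((sum_nonneg hf).trans hsum) hs
  have hcard : (#s : ℝ) ≤ #(s \ B) + #B := by
    exact_mod_cast (card_le_card_sdiff_add_card (s := s) (t := B))
  have hne : (s \ B).Nonempty := by
    rw [← card_pos, ← Nat.cast_pos (α := ℝ)]
    linarith
  have hlt : #(s \ B) * (2 * c) < ∑ x ∈ s \ B, f x := by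
    rw [← nsmul_eq_mul, ← sum_const]
    exact sum_lt_sum_of_nonempty hne fun x hx => h x (mem_sdiff.1 hx).1 (mem_sdiff.1 hx).2
  have hle : ∑ x ∈ s \ B, f x ≤ ∑ x ∈ s, f x :=
    sum_le_sum_of_subset_of_nonneg sdiff_subset fun x hx _ => hf x hx
  nlinarith

open Classical in
theorem card_filter_le_card_filter_sdiff_add {α : Type*} (s X : Finset α) (P : α → Prop) :
    #(s.filter P) ≤ #((s \ X).filter P) + #X := by
  refine (card_le_card fun x hx => ?_).trans (card_union_le _ _)
  simp only [mem_filter, mem_union, mem_sdiff] at hx ⊢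
  tauto

theorem card_filter_forall_piFinset_le {α : Type*} {s : Finset α} {P : α → Prop}
    [DecidablePred P] {θ : ℝ} (h : (#(s.filter P) : ℝ) ≤ θ * #s) (n : ℕ) :
    (#((Fintype.piFinset fun _ : Fin n => s).filter fun b => ∀ j, P (b j)) : ℝ) ≤
      θ ^ n * #(Fintype.piFinset fun _ : Fin n => s) := by
  have heq : ((Fintype.piFinset fun _ : Fin n => s).filter fun b => ∀ j, P (b j)) =
      Fintype.piFinset fun _ => s.filter P := by
    ext b
    simp [forall_and]
  rw [heq, Fintype.card_piFinset_const, Fintype.card_piFinset_const, Nat.cast_pow, Nat.cast_pow,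
    ← mul_pow]
  exact pow_le_pow_left₀ (Nat.cast_nonneg _) h n

end Counting

section DominatingSets

variable {W : Type*} (D : SimpleGraph W)

open Classical in
/-- The vertices of `U` with no neighbour in `F`. -/
noncomputable def undominated (U F : Finset W) : Finset W :=
  U.filter fun u => ∀ b ∈ F, ¬ D.Adj u b

variable {D}

theorem mem_undominated {U F : Finset W} {u : W} :
    u ∈ undominated D U F ↔ u ∈ U ∧ ∀ b ∈ F, ¬ D.Adj u b := by
  classical exact mem_filter

theorem undominated_subset_undominated {U B F : Finset W} (h : B ⊆ F) :
    undominated D U F ⊆ undominated D U B := fun _ hu =>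
  mem_undominated.2 (And.imp_right (fun hF b hb => hF b (h hb)) (mem_undominated.1 hu))

open Classical in
theorem sum_card_undominated_le {Z U : Finset W}
    (hdeg : ∀ u ∈ U, #Z ≤ 4 * #(Z.filter (D.Adj u))) (n : ℕ) :
    ∑ b ∈ Fintype.piFinset fun _ : Fin n => Z, (#(undominated D U (univ.image b)) : ℝ) ≤
      (3 / 4) ^ n * #U * #(Fintype.piFinset fun _ : Fin n => Z) := by
  have hcard : ∀ b : Fin n → W, (#(undominated D U (univ.image b)) : ℝ) =
      ∑ u ∈ U, if ∀ j, ¬ D.Adj u (b j) then 1 else 0 := by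
    simp [undominated]
  have hnonadj : ∀ u ∈ U, (#(Z.filter fun z => ¬ D.Adj u z) : ℝ) ≤ 3 / 4 * #Z := by
    intro u hu
    have hsplit := card_filter_add_card_filter_not (s := Z) (D.Adj u)
    have hle : 4 * #(Z.filter fun z => ¬ D.Adj u z) ≤ 3 * #Z := by
      have := hdeg u hu
      omega
    have : (4 : ℝ) * #(Z.filter fun z => ¬ D.Adj u z) ≤ 3 * #Z := by exact_mod_cast hle
    linarith
  simp only [hcard]
  rw [sum_comm]
  calc ∑ u ∈ U, ∑ b ∈ Fintype.piFinset fun _ : Fin n => Z,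
        (if ∀ j, ¬ D.Adj u (b j) then (1 : ℝ) else 0)
      ≤ ∑ _u ∈ U, (3 / 4 : ℝ) ^ n * #(Fintype.piFinset fun _ : Fin n => Z) := by
        refine sum_le_sum fun u hu => ?_
        rw [sum_boole]
        exact card_filter_forall_piFinset_le (hnonadj u hu) n
    _ = _ := by
        rw [sum_const, nsmul_eq_mul]
        ring

open Classical in
/-- A uniformly random `n`-tuple of elements of `Z` does not lie inside any of the few small sets
`A`, and leaves few vertices undominated. -/
theorem exists_subset_undominated_le {Z U : Finset W} {n : ℕ} {θ : ℝ} {𝒜 : Finset (Finset W)}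
    (hZ : Z.Nonempty) (hn : 0 < n) (hdeg : ∀ u ∈ U, #Z ≤ 4 * #(Z.filter (D.Adj u)))
    (h𝒜 : ∀ A ∈ 𝒜, (#(Z.filter (· ∈ A)) : ℝ) ≤ θ * #Z) (hθ : #𝒜 * θ ^ n < 1 / 2) :
    ∃ B ⊆ Z, B.Nonempty ∧ #B ≤ n ∧ (∀ A ∈ 𝒜, ¬ B ⊆ A) ∧
      (#(undominated D U B) : ℝ) ≤ 2 * ((3 / 4) ^ n * #U) := by
  let Ω : Finset (Fin n → W) := Fintype.piFinset fun _ => Z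
  let bad : Finset (Fin n → W) := 𝒜.biUnion fun A => Ω.filter fun b => ∀ j, b j ∈ A
  have hΩ : (0 : ℝ) < #Ω := Nat.cast_pos.2 (card_pos.2 (Fintype.piFinset_nonempty.2 fun _ => hZ))
  have hbad : (#bad : ℝ) < 1 / 2 * #Ω :=
    calc (#bad : ℝ) ≤ ∑ A ∈ 𝒜, (#(Ω.filter fun b => ∀ j, b j ∈ A) : ℝ) := by
          exact_mod_cast card_biUnion_le
      _ ≤ ∑ _A ∈ 𝒜, θ ^ n * #Ω :=
          sum_le_sum fun _ hA => card_filter_forall_piFinset_le (h𝒜 _ hA) n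
      _ = #𝒜 * θ ^ n * #Ω := by rw [sum_const, nsmul_eq_mul, mul_assoc]
      _ < 1 / 2 * #Ω := by gcongr
  obtain ⟨b, hbΩ, hbad, hb⟩ := exists_mem_notMem_le_two_mul (fun _ _ => Nat.cast_nonneg _)
    (sum_card_undominated_le hdeg n) hbad
  have : Nonempty (Fin n) := ⟨⟨0, hn⟩⟩
  refine ⟨univ.image b, ?_, univ_nonempty.image b, ?_, fun A hA hbA => hbad ?_, hb⟩
  · simpa [image_subset_iff] using Fintype.mem_piFinset.1 hbΩ
  · exact card_image_le.trans_eq (card_fin n)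
  · refine mem_biUnion.2 ⟨A, hA, mem_filter.2 ⟨hbΩ, fun j => hbA (mem_image_of_mem b (mem_univ j))⟩⟩

end DominatingSets

section DenseCliqueMinor

variable {W : Type*} {D : SimpleGraph W} {M U : Finset W} {r t L : ℕ}

open Classical in
/-- Any two vertices of `U` outside a set of at most `L` vertices are joined by a path in `U` with
at most two interior vertices avoiding that set. -/
def ShortLinked (D : SimpleGraph W) (U : Finset W) (L : ℕ) : Prop :=
  ∀ X : Finset W, #X ≤ L → ∀ x ∈ U \ X, ∀ y ∈ U \ X, ∃ p ∈ U \ X, ∃ q ∈ U \ X,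
    (x = p ∨ D.Adj x p) ∧ (p = q ∨ D.Adj p q) ∧ (q = y ∨ D.Adj q y)

open Classical in
theorem ShortLinked.exists_connected_superset {B X : Finset W} (hlink : ShortLinked D U L)
    (hX : #X ≤ L) (hB : B.Nonempty) (hBX : B ⊆ U \ X) :
    ∃ F ⊆ U \ X, B ⊆ F ∧ #F ≤ 3 * #B ∧ (D.induce (F : Set W)).Connected := by
  obtain ⟨b₀, hb₀⟩ := hB
  choose! p hp q hq hlp hpq hql using fun b (hb : b ∈ B) => hlink X hX b₀ (hBX hb₀) b (hBX hb)
  let F : Finset W := B ∪ (B.image p ∪ B.image q)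
  have hBF : B ⊆ F := subset_union_left
  have hpF : ∀ b ∈ B, p b ∈ F := fun b hb => by
    simp only [F, mem_union, mem_image_of_mem p hb, true_or, or_true]
  have hqF : ∀ b ∈ B, q b ∈ F := fun b hb => by
    simp only [F, mem_union, mem_image_of_mem q hb, or_true]
  have hcases : ∀ z ∈ F, ∃ b ∈ B, b = z ∨ p b = z ∨ q b = z := by
    intro z hz
    simp only [F, mem_union, mem_image] at hz
    rcases hz with hz | ⟨b, hb, rfl⟩ | ⟨b, hb, rfl⟩
    exacts [⟨z, hz, Or.inl rfl⟩, ⟨b, hb, Or.inr (Or.inl rfl)⟩, ⟨b, hb, Or.inr (Or.inr rfl)⟩]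
  have extend : ∀ {a c}, ReachableWithin D F b₀ a → c ∈ F → (a = c ∨ D.Adj a c) →
      ReachableWithin D F b₀ c := by
    rintro a c h hc (rfl | hac)
    exacts [h, h.tail hac hc]
  refine ⟨F, fun z hz => ?_, hBF, ?_, ?_⟩
  · obtain ⟨b, hb, rfl | rfl | rfl⟩ := hcases z hz
    exacts [hBX hb, hp b hb, hq b hb]
  · calc #F ≤ #B + (#(B.image p) + #(B.image q)) :=
          (card_union_le _ _).trans (Nat.add_le_add_left (card_union_le _ _) _)
      _ ≤ #B + (#B + #B) := by grw [card_image_le, card_image_le]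
      _ = 3 * #B := by ring
  · refine (connected_induce_iff_forall_reachableWithin (mem_coe.2 (hBF hb₀))).2 fun z hz => ?_
    obtain ⟨b, hb, hz⟩ := hcases z hz
    have reach_p := extend (.refl b₀) (hpF b hb) (hlp b hb)
    have reach_q := extend reach_p (hqF b hb) (hpq b hb)
    rcases hz with rfl | rfl | rfl
    exacts [extend reach_q (hBF hb) (hql b hb), reach_p, reach_q]

open Classical in
theorem shortLinked_of_card_le_add {d : ℕ} (hdeg : ∀ u ∈ U, #U ≤ #(U.filter (D.Adj u)) + d)
    (hd : 2 * d + L < #U) : ShortLinked D U L := by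
  intro X hX x hx y hy
  have hx' := hdeg x (mem_sdiff.1 hx).1
  have hy' := hdeg y (mem_sdiff.1 hy).1
  have hsum := card_union_add_card_inter (U.filter (D.Adj x)) (U.filter (D.Adj y))
  have hunion := card_le_card (union_subset (filter_subset (D.Adj x) U) (filter_subset (D.Adj y) U))
  obtain ⟨z, hz, hzX⟩ := exists_mem_notMem_of_card_lt_card
    (s := X) (t := U.filter (D.Adj x) ∩ U.filter (D.Adj y)) (by omega)
  simp only [mem_inter, mem_filter] at hz
  have hzU := mem_sdiff.2 ⟨hz.1.1, hzX⟩
  exact ⟨z, hzU, z, hzU, Or.inr hz.1.2, Or.inl rfl, Or.inr hz.2.2.symm⟩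

open Classical in
/-- If two vertices are not linked after removing `X`, then their closed neighbourhoods outside `X`
span no edges between them; each takes up about half of `M`, so each is nearly complete. -/
theorem exists_nearly_complete_of_not_shortLinked
    (hdeg : ∀ x ∈ M, #M ≤ 2 * #(M.filter (D.Adj x)) + 2) (hM : ¬ ShortLinked D M L) :
    ∃ U ⊆ M, #M ≤ 2 * #U + 2 + 2 * L ∧ ∀ u ∈ U, #U ≤ #(U.filter (D.Adj u)) + (L + 2) := by
  unfold ShortLinked at hM
  push Not at hM
  obtain ⟨X, hX, x, hx, y, hy, hsep⟩ := hM
  let N (z : W) : Finset W := (M \ X).filter fun u => z = u ∨ D.Adj z u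
  have hNM : ∀ z, N z ⊆ M := fun z => (filter_subset _ _).trans sdiff_subset
  have hNcard : ∀ z ∈ M, #M ≤ 2 * #(N z) + 2 + 2 * L := by
    intro z hz
    have hle : #((M \ X).filter (D.Adj z)) ≤ #(N z) :=
      card_le_card (monotone_filter_right _ fun _ _ => Or.inr)
    have := card_filter_le_card_filter_sdiff_add M X (D.Adj z)
    have := hdeg z hz
    omega
  have hnonadj : ∀ u ∈ N x, ∀ v ∈ N y, u ≠ v ∧ ¬ D.Adj u v := by
    intro u hu v hv
    simp only [N, mem_filter] at hu hv
    have hyv : v = y ∨ D.Adj v y := hv.2.imp Eq.symm SimpleGraph.Adj.symm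
    have h := hsep u hu.1 v hv.1 hu.2
    exact ⟨fun huv => not_or.2 (h (Or.inl huv)) hyv, fun huv => not_or.2 (h (Or.inr huv)) hyv⟩
  have hdisj : Disjoint (N x) (N y) := disjoint_left.2 fun u hu hu' => (hnonadj u hu u hu').1 rfl
  have hrest := card_sdiff_add_card_eq_card (union_subset (hNM x) (hNM y))
  rw [card_union_of_disjoint hdisj] at hrest
  refine ⟨N x, hNM x, hNcard x (mem_sdiff.1 hx).1, fun u hu => ?_⟩
  have hsplit : #(M.filter (D.Adj u)) ≤ #((N x).filter (D.Adj u)) + #(M \ (N x ∪ N y)) := by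
    refine (card_le_card fun z hz => ?_).trans (card_union_le _ _)
    have := fun hzy => (hnonadj u hu z hzy).2
    simp only [mem_filter, mem_union, mem_sdiff] at hz ⊢
    tauto
  have := hdeg u (hNM x hu)
  have := hNcard y (mem_sdiff.1 hy).1
  omega

theorem card_mul_pow_lt_half {j : ℕ} (hr : 4 ≤ r) (hj : j ≤ 2 ^ r ^ 2) :
    (j : ℝ) * (4 * (3 / 4) ^ (3 * r)) ^ (3 * r) < 1 / 2 := by
  obtain ⟨d, rfl⟩ : ∃ d, r = d + 2 := ⟨r - 2, by omega⟩
  have hbase : (4 : ℝ) * (3 / 4) ^ (3 * (d + 2)) ≤ (1 / 2) ^ d :=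
    calc (4 : ℝ) * (3 / 4) ^ (3 * (d + 2)) = 4 * ((3 / 4) ^ 3) ^ (d + 2) := by rw [pow_mul]
      _ ≤ 4 * (1 / 2) ^ (d + 2) := by gcongr; norm_num
      _ = (1 / 2) ^ d := by ring
  have hj' : (j : ℝ) ≤ 2 ^ (d + 2) ^ 2 := by exact_mod_cast hj
  calc (j : ℝ) * (4 * (3 / 4) ^ (3 * (d + 2))) ^ (3 * (d + 2))
      ≤ 2 ^ (d + 2) ^ 2 * ((1 / 2) ^ d) ^ (3 * (d + 2)) := by gcongr
    _ = 2 ^ (d + 2) ^ 2 * (1 / 2) ^ (d * (3 * (d + 2))) := by rw [← pow_mul]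
    _ ≤ 2 ^ (d + 2) ^ 2 * (1 / 2) ^ ((d + 2) ^ 2 + 2) := by
      refine mul_le_mul_of_nonneg_left ?_ (by positivity)
      exact pow_le_pow_of_le_one (by norm_num) (by norm_num) (by nlinarith)
    _ = 1 / 4 := by
      rw [pow_add, ← mul_assoc, ← mul_pow]
      norm_num
    _ < 1 / 2 := by norm_num

/-- A connected branch set of at most `9 r` vertices of `U` which leaves at most a
`2 (3 / 4) ^ (3 r)` fraction of `U` undominated. -/
structure IsDominatingBranch (D : SimpleGraph W) (U : Finset W) (r : ℕ) (F : Finset W) : Prop where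
  subset : F ⊆ U
  card_le : #F ≤ 9 * r
  connected : (D.induce (F : Set W)).Connected
  card_undominated_le : (#(undominated D U F) : ℝ) ≤ 2 * ((3 / 4) ^ (3 * r) * #U)

open Classical in
theorem ShortLinked.exists_isDominatingBranch (hlink : ShortLinked D U (9 * r * t)) (hr : 4 ≤ r)
    (ht : t ≤ 2 ^ r ^ 2) (hlarge : 12 * (9 * r * t) ≤ #U)
    (hdeg : ∀ u ∈ U, #U ≤ 3 * #(U.filter (D.Adj u))) {𝓕 : Finset (Finset W)}
    (h𝓕t : #𝓕 < t) (h𝓕 : ∀ F ∈ 𝓕, IsDominatingBranch D U r F) :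
    ∃ F, IsDominatingBranch D U r F ∧
      ∀ F' ∈ 𝓕, Disjoint F F' ∧ ∃ a ∈ F, ∃ b ∈ F', D.Adj a b := by
  let X : Finset W := 𝓕.biUnion id
  have hX : #X ≤ 9 * r * t :=
    calc #X ≤ #𝓕 * (9 * r) := card_biUnion_le_card_mul _ _ _ fun F hF => (h𝓕 F hF).card_le
      _ ≤ 9 * r * t := by grw [mul_comm, h𝓕t]
  have hXU : #U ≤ #(U \ X) + #X := card_le_card_sdiff_add_card
  have hL : 0 < 9 * r * t := by have := pos_of_gt h𝓕t; positivity
  have hdegX : ∀ u ∈ U, #(U \ X) ≤ 4 * #((U \ X).filter (D.Adj u)) := by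
    intro u hu
    have := card_filter_le_card_filter_sdiff_add U X (D.Adj u)
    have := hdeg u hu
    have := card_le_card (sdiff_subset (s := U) (t := X))
    omega
  have hsmall : ∀ A ∈ 𝓕.image (undominated D U),
      (#((U \ X).filter (· ∈ A)) : ℝ) ≤ 4 * (3 / 4) ^ (3 * r) * #(U \ X) := by
    refine forall_mem_image.2 fun F hF => ?_
    have hUX : (#U : ℝ) ≤ 2 * #(U \ X) := by
      exact_mod_cast (show #U ≤ 2 * #(U \ X) by omega)
    calc (#((U \ X).filter (· ∈ undominated D U F)) : ℝ) ≤ #(undominated D U F) := by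
          exact_mod_cast card_le_card fun z hz => (mem_filter.1 hz).2
      _ ≤ 2 * ((3 / 4) ^ (3 * r) * #U) := (h𝓕 F hF).card_undominated_le
      _ ≤ 2 * ((3 / 4) ^ (3 * r) * (2 * #(U \ X))) := by gcongr
      _ = 4 * (3 / 4) ^ (3 * r) * #(U \ X) := by ring
  obtain ⟨B, hBX, hB, hBcard, hB𝓕, hBU⟩ := exists_subset_undominated_le
    (card_pos.1 (by omega)) (by omega) hdegX hsmall
    (card_mul_pow_lt_half hr (card_image_le.trans (h𝓕t.le.trans ht)))
  obtain ⟨F, hFX, hBF, hFcard, hF⟩ := hlink.exists_connected_superset hX hB hBX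
  refine ⟨F, ⟨hFX.trans sdiff_subset, by omega, hF, le_trans ?_ hBU⟩, fun F' hF' => ⟨?_, ?_⟩⟩
  · exact_mod_cast card_le_card (undominated_subset_undominated hBF)
  · exact disjoint_of_subset_left hFX
      (disjoint_of_subset_right (subset_biUnion_of_mem id hF') sdiff_disjoint)
  · obtain ⟨a, ha, haF'⟩ := not_subset.1 (hB𝓕 _ (mem_image_of_mem _ hF'))
    simp only [mem_undominated, (mem_sdiff.1 (hBX ha)).1, true_and] at haF'
    push Not at haF'
    exact ⟨a, hBF ha, haF'⟩

open Classical in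
theorem ShortLinked.cliqueMinor (hlink : ShortLinked D U (9 * r * t)) (hr : 4 ≤ r)
    (ht : t ≤ 2 ^ r ^ 2) (hlarge : 12 * (9 * r * t) ≤ #U)
    (hdeg : ∀ u ∈ U, #U ≤ 3 * #(U.filter (D.Adj u))) :
    GraphMinor (⊤ : SimpleGraph (Fin t)) D := by
  have : Std.Symm fun F F' : Finset W => Disjoint F F' ∧ ∃ a ∈ F, ∃ b ∈ F', D.Adj a b :=
    ⟨fun F F' ⟨hdisj, a, ha, b, hb, hab⟩ => ⟨hdisj.symm, b, hb, a, ha, hab.symm⟩⟩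
  obtain ⟨𝓕, rfl, h𝓕, hpair⟩ := exists_finset_card_eq_pairwise (t := t)
    fun 𝓕 h𝓕t (h𝓕 : ∀ F ∈ 𝓕, IsDominatingBranch D U r F) => by
      obtain ⟨F, hF, htouch⟩ := hlink.exists_isDominatingBranch hr ht hlarge hdeg h𝓕t h𝓕
      refine ⟨F, fun hmem => ?_, hF, htouch⟩
      obtain ⟨-, a, ha, -⟩ := htouch F hmem
      exact disjoint_left.1 (htouch F hmem).1 ha ha
  exact .top_of_pairwise (fun F hF => (h𝓕 F hF).connected) hpair

open Classical in
theorem cliqueMinor_of_half_degree (hr : 4 ≤ r) (ht : t ≤ 2 ^ r ^ 2)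
    (hlarge : 360 * r * t ≤ #M) (hdeg : ∀ x ∈ M, #M ≤ 2 * #(M.filter (D.Adj x)) + 2) :
    GraphMinor (⊤ : SimpleGraph (Fin t)) D := by
  rcases t.eq_zero_or_pos with rfl | ht0
  · exact .of_subsingleton _ _ fun ⟨i⟩ => i.elim0
  have hL : 36 ≤ 9 * r * t := by nlinarith
  have hM : 40 * (9 * r * t) ≤ #M := by linarith
  by_cases hlink : ShortLinked D M (9 * r * t)
  · refine hlink.cliqueMinor hr ht (by omega) fun u hu => ?_
    have := hdeg u hu
    omega
  · obtain ⟨U, -, hMU, hU⟩ := exists_nearly_complete_of_not_shortLinked hdeg hlink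
    refine (shortLinked_of_card_le_add hU (by omega)).cliqueMinor hr ht (by omega) fun u hu => ?_
    have := hU u hu
    omega

open Classical in
theorem cliqueMinor_of_mul_card_lt_card_edgeFinset {V : Type*} [Fintype V] {G : SimpleGraph V}
    (hr : 4 ≤ r) (ht : t ≤ 2 ^ r ^ 2) (h : 360 * r * t * Fintype.card V < #G.edgeFinset) :
    GraphMinor (⊤ : SimpleGraph (Fin t)) G := by
  obtain ⟨W, H, M, hHG, hM, hdeg⟩ := exists_minor_with_dense_neighborFinset G h
  exact (cliqueMinor_of_half_degree hr ht hM hdeg).trans hHG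

end DenseCliqueMinor

section Voronoi

variable {ι V : Type*} {G : SimpleGraph V}

/-- `σ` behaves like the depth function `x ↦ r + 1 - d(c, x)` of a ball `B` with centre `c` and
radius `r`: it is positive exactly on `B`, it is `1`-Lipschitz, and from every point of `B` other
than `c` one can ascend. -/
structure IsDepthFunction (G : SimpleGraph V) (B : Set V) (c : V) (σ : V → ℕ) : Prop where
  pos_iff_mem : ∀ {x}, 0 < σ x ↔ x ∈ B
  center_mem : c ∈ B
  le_center : ∀ x, σ x ≤ σ c
  le_add_one : ∀ {x y}, G.Adj x y → σ x ≤ σ y + 1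
  exists_ascent : ∀ x ∈ B, x ≠ c → ∃ y, G.Adj x y ∧ σ y = σ x + 1

theorem IsDepthFunction.induction {B : Set V} {c : V} {σ : V → ℕ} (h : IsDepthFunction G B c σ)
    {motive : V → Prop} (center : motive c)
    (descend : ∀ x y, G.Adj x y → σ y = σ x + 1 → motive y → motive x) {x : V} (hx : x ∈ B) :
    motive x := by
  induction hn : σ c - σ x using Nat.strong_induction_on generalizing x with
  | _ n ih =>
    by_cases hxc : x = c
    · exact hxc ▸ center
    · obtain ⟨y, hxy, hy⟩ := h.exists_ascent x hx hxc
      have := h.le_center y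
      exact descend x y hxy hy (ih _ (by omega) (h.pos_iff_mem.1 (by omega)) rfl)

open Classical in
theorem exists_isDepthFunction_gBall (G : SimpleGraph V) (c : V) (r : ℕ) :
    ∃ σ, IsDepthFunction G (G.gBall c r) c σ := by
  refine ⟨fun x => if G.Reachable c x then r + 1 - G.dist c x else 0,
    fun {x} => ?_, by simp [SimpleGraph.gBall], fun x => ?_, fun {x y} hxy => ?_,
    fun x hx hxc => ?_⟩
  · by_cases hx : G.Reachable c x
    · simp only [hx, if_true, SimpleGraph.gBall, Set.mem_ofPred_eq, true_and]
      omega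
    · simp [hx, SimpleGraph.gBall]
  · simp only [SimpleGraph.Reachable.refl, if_true, SimpleGraph.dist_self]
    split_ifs <;> omega
  · by_cases hx : G.Reachable c x
    · simp only [hx, hx.trans hxy.reachable, if_true]
      have := hxy.diff_dist_adj (u := c)
      omega
    · simp [hx]
  · obtain ⟨hreach, hdist⟩ : G.Reachable c x ∧ G.dist c x ≤ r := hx
    obtain ⟨p, hp⟩ := hreach.symm.exists_walk_length_eq_dist
    cases p with
    | nil => exact absurd rfl hxc
    | @cons _ y _ hxy q =>
      refine ⟨y, hxy, ?_⟩
      simp only [hreach, hreach.trans hxy.reachable, if_true]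
      rw [SimpleGraph.Walk.length_cons, SimpleGraph.dist_comm] at hp
      have hq : G.dist c y ≤ q.length := SimpleGraph.dist_comm.trans_le (SimpleGraph.dist_le q)
      have := hxy.diff_dist_adj (u := c)
      omega

/-- The points where `σ i` is positive and the largest among the functions indexed by `S`, ties
being broken by `ρ`. -/
def voronoiCell (S : Finset ι) (ρ : ι → ℕ) (σ : ι → V → ℕ) (i : ι) : Set V :=
  {x | 0 < σ i x ∧ ∀ j ∈ S, σ j x < σ i x ∨ (σ j x = σ i x ∧ ρ i ≤ ρ j)}

/-- The graph joining two sets of the family `B` if some common point lies in no other set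
indexed by `S`. -/
def privateIntersectionGraph (S : Finset ι) (B : ι → Set V) : SimpleGraph ι where
  Adj i j := i ≠ j ∧ ∃ x, x ∈ B i ∧ x ∈ B j ∧ ∀ k ∈ S, k ≠ i → k ≠ j → x ∉ B k
  symm := ⟨fun _ _ ⟨hij, x, hi, hj, hx⟩ =>
    ⟨hij.symm, x, hj, hi, fun k hk hkj hki => hx k hk hki hkj⟩⟩
  loopless := ⟨fun _ h => h.1 rfl⟩

variable {S : Finset ι} {ρ : ι → ℕ} {σ : ι → V → ℕ} {B : ι → Set V} {c : ι → V}

theorem disjoint_voronoiCell (hρ : Set.InjOn ρ S) {i j : ι} (hi : i ∈ S) (hj : j ∈ S)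
    (hij : i ≠ j) : Disjoint (voronoiCell S ρ σ i) (voronoiCell S ρ σ j) := by
  refine Set.disjoint_left.2 fun x ⟨_, hxi⟩ ⟨_, hxj⟩ => hij (hρ hi hj ?_)
  have := hxi j hj
  have := hxj i hi
  omega

theorem voronoiCell_ascent (hσ : ∀ i ∈ S, IsDepthFunction G (B i) (c i) (σ i)) {i : ι} {x y : V}
    (hx : x ∈ voronoiCell S ρ σ i) (hxy : G.Adj x y) (h : σ i y = σ i x + 1) :
    y ∈ voronoiCell S ρ σ i := by
  refine ⟨by omega, fun j hj => ?_⟩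
  have := (hσ j hj).le_add_one hxy.symm
  have := hx.2 j hj
  omega

theorem connected_voronoiCell (hσ : ∀ i ∈ S, IsDepthFunction G (B i) (c i) (σ i)) {i : ι}
    (hi : i ∈ S) (hc : c i ∈ voronoiCell S ρ σ i) :
    (G.induce (voronoiCell S ρ σ i)).Connected := by
  refine (connected_induce_iff_forall_reachableWithin hc).2 fun x hx => ?_
  refine (hσ i hi).induction (motive := fun x => x ∈ voronoiCell S ρ σ i →
    ReachableWithin G (voronoiCell S ρ σ i) (c i) x) (fun _ => .refl _)
    (fun x y hxy h ih hx => ?_) ((hσ i hi).pos_iff_mem.1 hx.1) hx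
  exact (ih (voronoiCell_ascent hσ hx hxy h)).tail hxy.symm hx

theorem mem_voronoiCell_or_mem_voronoiCell {i j : ι} {x : V} (hj : 0 < σ j x)
    (hk : ∀ k ∈ S, k ≠ i → k ≠ j → σ k x < σ j x) :
    x ∈ voronoiCell S ρ σ i ∨ x ∈ voronoiCell S ρ σ j := by
  have hother : ∀ k ∈ S, k = i ∨ k = j ∨ σ k x < σ j x := fun k hkS => by
    have := hk k hkS
    tauto
  by_cases h : σ j x < σ i x ∨ (σ j x = σ i x ∧ ρ i ≤ ρ j)
  · refine Or.inl ⟨by omega, fun k hkS => ?_⟩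
    rcases hother k hkS with rfl | rfl | hlt <;> omega
  · refine Or.inr ⟨hj, fun k hkS => ?_⟩
    rcases hother k hkS with rfl | rfl | hlt <;> omega

/-- Ascending `σ j` from `x`, only the cells of `i` and `j` can be met. -/
theorem exists_adj_voronoiCell_of_mem (hσ : ∀ i ∈ S, IsDepthFunction G (B i) (c i) (σ i))
    (hρ : Set.InjOn ρ S) {i j : ι} (hi : i ∈ S) (hj : j ∈ S) (hij : i ≠ j)
    (hc : c j ∈ voronoiCell S ρ σ j) {x : V} (hx : x ∈ voronoiCell S ρ σ i) (hjx : 0 < σ j x)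
    (hk : ∀ k ∈ S, k ≠ i → k ≠ j → σ k x < σ j x) :
    ∃ u ∈ voronoiCell S ρ σ i, ∃ v ∈ voronoiCell S ρ σ j, G.Adj u v := by
  refine (hσ j hj).induction (motive := fun x => x ∈ voronoiCell S ρ σ i →
    (∀ k ∈ S, k ≠ i → k ≠ j → σ k x < σ j x) →
    ∃ u ∈ voronoiCell S ρ σ i, ∃ v ∈ voronoiCell S ρ σ j, G.Adj u v) ?_ ?_
    ((hσ j hj).pos_iff_mem.1 hjx) hx hk
  · exact fun h _ => absurd hc (Set.disjoint_left.1 (disjoint_voronoiCell hρ hi hj hij) h)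
  · intro x y hxy h ih hx hk
    have hk' : ∀ k ∈ S, k ≠ i → k ≠ j → σ k y < σ j y := by
      intro k hkS hki hkj
      have := hk k hkS hki hkj
      have := (hσ k hkS).le_add_one hxy.symm
      omega
    rcases mem_voronoiCell_or_mem_voronoiCell (ρ := ρ) (by omega) hk' with hy | hy
    · exact ih hy hk'
    · exact ⟨x, hx, y, hy, hxy⟩

theorem exists_adj_voronoiCell (hσ : ∀ i ∈ S, IsDepthFunction G (B i) (c i) (σ i))
    (hρ : Set.InjOn ρ S) {i j : ι} (hi : i ∈ S) (hj : j ∈ S)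
    (hci : c i ∈ voronoiCell S ρ σ i) (hcj : c j ∈ voronoiCell S ρ σ j)
    (h : (privateIntersectionGraph S B).Adj i j) :
    ∃ u ∈ voronoiCell S ρ σ i, ∃ v ∈ voronoiCell S ρ σ j, G.Adj u v := by
  obtain ⟨hij, x, hix, hjx, hk⟩ := h
  rw [← (hσ i hi).pos_iff_mem] at hix
  rw [← (hσ j hj).pos_iff_mem] at hjx
  have hzero : ∀ k ∈ S, k ≠ i → k ≠ j → σ k x = 0 := fun k hkS hki hkj =>
    Nat.eq_zero_of_not_pos fun hpos => hk k hkS hki hkj ((hσ k hkS).pos_iff_mem.1 hpos)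
  have hj_max : ∀ k ∈ S, k ≠ i → k ≠ j → σ k x < σ j x := fun k hkS hki hkj =>
    (hzero k hkS hki hkj).trans_lt hjx
  rcases mem_voronoiCell_or_mem_voronoiCell (ρ := ρ) hjx hj_max with hx | hx
  · exact exists_adj_voronoiCell_of_mem hσ hρ hi hj hij hcj hx hjx hj_max
  · obtain ⟨u, hu, v, hv, huv⟩ := exists_adj_voronoiCell_of_mem hσ hρ hj hi hij.symm hci hx hix
      fun k hkS hkj hki => (hzero k hkS hki hkj).trans_lt hix
    exact ⟨v, hv, u, hu, huv.symm⟩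

/-- If `c i` lies in the cell of `k`, then the whole ball of `i` lies inside that of `k`. -/
theorem eq_of_center_notMem_voronoiCell (hσ : ∀ i ∈ S, IsDepthFunction G (B i) (c i) (σ i))
    {i : ι} (hi : i ∈ S) (hc : c i ∉ voronoiCell S ρ σ i) {j l : ι}
    (hij : (privateIntersectionGraph S B).Adj i j) (hil : (privateIntersectionGraph S B).Adj i l) :
    j = l := by
  obtain ⟨k, hkS, hki, hk⟩ : ∃ k ∈ S, k ≠ i ∧ σ i (c i) ≤ σ k (c i) := by
    by_contra! hno
    refine hc ⟨(hσ i hi).pos_iff_mem.2 (hσ i hi).center_mem, fun k hkS => ?_⟩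
    rcases eq_or_ne k i with rfl | hki
    · exact Or.inr ⟨rfl, le_rfl⟩
    · exact Or.inl (hno k hkS hki)
  have hle : ∀ x ∈ B i, σ i x ≤ σ k x := fun x hx =>
    (hσ i hi).induction (motive := fun x => σ i x ≤ σ k x) hk (fun x y hxy h ih => by
      have := (hσ k hkS).le_add_one hxy.symm
      omega) hx
  have hsub : B i ⊆ B k := fun x hx =>
    (hσ k hkS).pos_iff_mem.1 (((hσ i hi).pos_iff_mem.2 hx).trans_le (hle x hx))
  have hk_eq : ∀ j, (privateIntersectionGraph S B).Adj i j → k = j := by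
    rintro j ⟨-, x, hix, -, hx⟩
    by_contra hkj
    exact hx k hkS hki hkj (hsub hix)
  exact (hk_eq j hij).symm.trans (hk_eq l hil)

open Classical in
theorem card_interedges_self (H : SimpleGraph ι) (s : Finset ι) :
    #(H.interedges s s) = 2 * #(H.induce (s : Set ι)).edgeFinset := by
  rw [SimpleGraph.two_mul_card_edgeFinset]
  symm
  refine card_bij (fun e _ => (e.1.1, e.2.1)) ?_ ?_ ?_
  · rintro ⟨i, j⟩ he
    exact Rel.mem_interedges_iff.2 ⟨i.2, j.2, by simpa using he⟩
  · rintro ⟨i, j⟩ - ⟨i', j'⟩ - h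
    exact Prod.ext (Subtype.ext (Prod.ext_iff.1 h).1) (Subtype.ext (Prod.ext_iff.1 h).2)
  · rintro ⟨i, j⟩ he
    obtain ⟨hi, hj, hij⟩ := Rel.mem_interedges_iff.1 he
    exact ⟨(⟨i, hi⟩, ⟨j, hj⟩), by simpa using hij, rfl⟩

open Classical in
theorem card_interedges_le_of_subsingleton {H : SimpleGraph ι} {s t : Finset ι}
    (h : ∀ i ∈ s, ∀ j l, H.Adj i j → H.Adj i l → j = l) : #(H.interedges s t) ≤ #s := by
  refine card_le_card_of_injOn Prod.fst (fun e he => (Rel.mem_interedges_iff.1 he).1) ?_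
  rintro ⟨i, j⟩ he ⟨i', l⟩ he' (rfl : i = i')
  rw [mem_coe, SimpleGraph.mem_interedges_iff] at he he'
  exact Prod.ext rfl (h i he.1 j l he.2.2 he'.2.2)

open Classical in
theorem graphMinor_induce_privateIntersectionGraph
    (hσ : ∀ i ∈ S, IsDepthFunction G (B i) (c i) (σ i)) (hρ : Set.InjOn ρ S) :
    GraphMinor ((privateIntersectionGraph S B).induce
      (S.filter fun i => c i ∈ voronoiCell S ρ σ i : Set ι)) G := by
  have hcenter : ∀ i : (S.filter fun i => c i ∈ voronoiCell S ρ σ i : Set ι),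
      i.1 ∈ S ∧ c i ∈ voronoiCell S ρ σ i := fun i => mem_filter.1 i.2
  exact ⟨fun i => voronoiCell S ρ σ i,
    fun i => connected_voronoiCell hσ (hcenter i).1 (hcenter i).2,
    fun i j hij =>
      disjoint_voronoiCell hρ (hcenter i).1 (hcenter j).1 fun h => hij (Subtype.ext h),
    fun i j hij => exists_adj_voronoiCell hσ hρ (hcenter i).1 (hcenter j).1 (hcenter i).2
      (hcenter j).2 hij⟩

open Classical in
theorem card_interedges_privateIntersectionGraph_le {r t : ℕ} (hr : 4 ≤ r) (ht : t ≤ 2 ^ r ^ 2)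
    (hG : ¬ GraphMinor (⊤ : SimpleGraph (Fin t)) G)
    (hσ : ∀ i ∈ S, IsDepthFunction G (B i) (c i) (σ i)) :
    #((privateIntersectionGraph S B).interedges S S) ≤ 2 * (360 * r * t + 1) * #S := by
  obtain ⟨ρ, hρ⟩ := Set.countable_iff_exists_injOn.1 S.countable_toSet
  let H := privateIntersectionGraph S B
  let S₁ := S.filter fun i => c i ∈ voronoiCell S ρ σ i
  let S₂ := S.filter fun i => c i ∉ voronoiCell S ρ σ i
  have hS₁ : #(H.interedges S₁ S₁) ≤ 2 * (360 * r * t * #S₁) := by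
    rw [card_interedges_self]
    refine Nat.mul_le_mul_left 2 (not_lt.1 fun hlt => hG ?_)
    refine (cliqueMinor_of_mul_card_lt_card_edgeFinset hr ht ?_).trans
      (graphMinor_induce_privateIntersectionGraph hσ hρ)
    rw [show Fintype.card (S₁ : Set ι) = #S₁ from Fintype.card_coe S₁]
    exact hlt.trans_eq (by congr!)
  have hS₂ : #(H.interedges S₂ S) ≤ #S₂ :=
    card_interedges_le_of_subsingleton fun i hi j l =>
      eq_of_center_notMem_voronoiCell hσ (mem_filter.1 hi).1 (mem_filter.1 hi).2
  have hcover : H.interedges S S ⊆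
      H.interedges S₁ S₁ ∪ (H.interedges S₂ S ∪ H.interedges S S₂) := by
    intro e
    simp only [mem_union, SimpleGraph.mem_interedges_iff, mem_filter, S₁, S₂]
    tauto
  have hcard : #S₁ + #S₂ = #S := card_filter_add_card_filter_not _
  have hsymm : #(H.interedges S S₂) = #(H.interedges S₂ S) :=
    have := H.symm
    Rel.card_interedges_comm _ _
  calc #(H.interedges S S)
      ≤ #(H.interedges S₁ S₁) + (#(H.interedges S₂ S) + #(H.interedges S S₂)) := by
        grw [hcover, card_union_le, card_union_le]
    _ ≤ 2 * (360 * r * t * #S₁) + (#S₂ + #S₂) := by rw [hsymm]; gcongr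
    _ ≤ 2 * (360 * r * t + 1) * #S := by
        rw [← hcard]
        nlinarith [Nat.zero_le (360 * r * t * #S₂)]

end Voronoi

section RandomSampling

variable {ι : Type*} {T : Finset ι} {p : ι → ℝ}

open Classical in
/-- The probability of obtaining exactly `S` when each `i ∈ T` is chosen independently with
probability `p i`. -/
noncomputable def sampleWeight (T : Finset ι) (p : ι → ℝ) (S : Finset ι) : ℝ :=
  (∏ i ∈ S, p i) * ∏ i ∈ T \ S, (1 - p i)

open Classical in
/-- The probability that a random subset of `T`, containing each `i ∈ T` independently with
probability `p i`, satisfies `φ`. -/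
noncomputable def sampleProb (T : Finset ι) (p : ι → ℝ) (φ : Finset ι → Prop) : ℝ :=
  ∑ S ∈ T.powerset with φ S, sampleWeight T p S

theorem sampleWeight_nonneg (hp : ∀ i ∈ T, p i ∈ Set.Icc 0 1) {S : Finset ι} (hS : S ⊆ T) :
    0 ≤ sampleWeight T p S := by
  classical
  exact mul_nonneg (prod_nonneg fun i hi => (hp i (hS hi)).1)
    (prod_nonneg fun i hi => sub_nonneg.2 (hp i (sdiff_subset hi)).2)

theorem sampleProb_mono (hp : ∀ i ∈ T, p i ∈ Set.Icc 0 1) {φ ψ : Finset ι → Prop}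
    (h : ∀ S ⊆ T, φ S → ψ S) : sampleProb T p φ ≤ sampleProb T p ψ := by
  classical
  refine sum_le_sum_of_subset_of_nonneg (fun S hS => ?_)
    fun S hS _ => sampleWeight_nonneg hp (mem_powerset.1 (mem_filter.1 hS).1)
  obtain ⟨hST, hφ⟩ := mem_filter.1 hS
  exact mem_filter.2 ⟨hST, h S (mem_powerset.1 hST) hφ⟩

open Classical in
theorem sampleProb_subset_and_disjoint (p : ι → ℝ) {A Q : Finset ι} (hA : A ⊆ T) (hQ : Q ⊆ T)
    (hAQ : Disjoint A Q) :
    sampleProb T p (fun S => A ⊆ S ∧ Disjoint S Q) = (∏ i ∈ A, p i) * ∏ i ∈ Q, (1 - p i) := by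
  have hweight : ∀ S, (if A ⊆ S ∧ Disjoint S Q then sampleWeight T p S else 0) =
      (∏ i ∈ S, if i ∈ Q then 0 else p i) * ∏ i ∈ T \ S, if i ∈ A then 0 else 1 - p i := by
    intro S
    split_ifs with h
    · rw [sampleWeight]
      congr 1
      · exact prod_congr rfl fun i hi => (if_neg (disjoint_left.1 h.2 hi)).symm
      · exact prod_congr rfl fun i hi => (if_neg fun hiA => (mem_sdiff.1 hi).2 (h.1 hiA)).symm
    · rcases not_and_or.1 h with hAS | hSQ
      · obtain ⟨i, hiA, hiS⟩ := not_subset.1 hAS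
        exact (mul_eq_zero_of_right _
          (prod_eq_zero (mem_sdiff.2 ⟨hA hiA, hiS⟩) (by rw [if_pos hiA]))).symm
      · obtain ⟨i, hiS, hiQ⟩ := not_disjoint_iff.1 hSQ
        exact (mul_eq_zero_of_left (prod_eq_zero hiS (by rw [if_pos hiQ])) _).symm
  have hfactor : ∀ i, ((if i ∈ Q then 0 else p i) + if i ∈ A then 0 else 1 - p i) =
      (if i ∈ A then p i else 1) * if i ∈ Q then 1 - p i else 1 := by
    intro i
    by_cases hiA : i ∈ A
    · simp [hiA, disjoint_left.1 hAQ hiA]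
    · by_cases hiQ : i ∈ Q <;> simp [hiA, hiQ]
  calc sampleProb T p (fun S => A ⊆ S ∧ Disjoint S Q)
    _ = ∑ S ∈ T.powerset, (∏ i ∈ S, if i ∈ Q then 0 else p i) *
          ∏ i ∈ T \ S, if i ∈ A then 0 else 1 - p i := by
        rw [sampleProb, sum_filter]
        exact sum_congr rfl fun S _ => by convert hweight S
    _ = ∏ i ∈ T, (if i ∈ A then p i else 1) * if i ∈ Q then 1 - p i else 1 := by
        rw [← prod_add, prod_congr rfl fun i _ => hfactor i]
    _ = (∏ i ∈ A, p i) * ∏ i ∈ Q, (1 - p i) := by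
        rw [prod_mul_distrib, prod_ite_mem, prod_ite_mem, inter_eq_right.2 hA, inter_eq_right.2 hQ]

theorem sampleProb_mem (p : ι → ℝ) {i : ι} (hi : i ∈ T) : sampleProb T p (i ∈ ·) = p i := by
  simpa using sampleProb_subset_and_disjoint p (singleton_subset_iff.2 hi) (empty_subset T)
    (disjoint_empty_right {i})

theorem sum_sampleWeight_mul_card_filter {κ : Type*} (Q : Finset κ) (φ : κ → Finset ι → Prop)
    [∀ a S, Decidable (φ a S)] :
    ∑ S ∈ T.powerset, sampleWeight T p S * #(Q.filter (φ · S)) =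
      ∑ a ∈ Q, sampleProb T p (φ a) := by
  classical
  simp only [sampleProb, sum_filter]
  rw [sum_comm]
  refine sum_congr rfl fun S _ => ?_
  rw [card_filter, Nat.cast_sum, mul_sum]
  refine sum_congr rfl fun a _ => ?_
  split_ifs <;> simp

theorem sum_sampleWeight_mul_card (T : Finset ι) (p : ι → ℝ) :
    ∑ S ∈ T.powerset, sampleWeight T p S * #S = ∑ i ∈ T, p i := by
  classical
  rw [← sum_congr rfl fun i hi => sampleProb_mem p hi,
    ← sum_sampleWeight_mul_card_filter T (fun i S => i ∈ S)]
  refine sum_congr rfl fun S hS => ?_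
  rw [filter_mem_eq_inter, inter_eq_right.2 (mem_powerset.1 hS)]

theorem one_sub_sum_le_prod_one_sub {Q : Finset ι} (hp : ∀ i ∈ Q, p i ∈ Set.Icc 0 1) :
    1 - ∑ i ∈ Q, p i ≤ ∏ i ∈ Q, (1 - p i) := by
  classical
  induction Q using Finset.induction_on with
  | empty => simp
  | insert a Q ha ih =>
    obtain ⟨⟨ha0, ha1⟩, hQ⟩ := (forall_mem_insert _ _ _).1 hp
    have hsum : 0 ≤ ∑ i ∈ Q, p i := sum_nonneg fun i hi => (hQ i hi).1
    rw [sum_insert ha, prod_insert ha]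
    calc 1 - (p a + ∑ i ∈ Q, p i) ≤ (1 - p a) * (1 - ∑ i ∈ Q, p i) := by
          linarith [mul_nonneg ha0 hsum]
      _ ≤ (1 - p a) * ∏ i ∈ Q, (1 - p i) := mul_le_mul_of_nonneg_left (ih hQ) (sub_nonneg.2 ha1)

end RandomSampling

section IntersectingPairs

variable {ι V : Type*} {T : Finset ι} {B : ι → Set V} {p : ι → ℝ} {Λ : ℝ}

/-- The graph joining two sets of the family `B` if they intersect. -/
def intersectionGraph (B : ι → Set V) : SimpleGraph ι where
  Adj i j := i ≠ j ∧ (B i ∩ B j).Nonempty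
  symm := ⟨fun _ _ ⟨hij, h⟩ => ⟨hij.symm, Set.inter_comm _ _ ▸ h⟩⟩
  loopless := ⟨fun _ h => h.1 rfl⟩

open Classical in
/-- A common point of `B i` and `B j` becomes private as soon as `i` and `j` are sampled and none
of the other sets containing it is; the latter has probability at least `1 / 2`. -/
theorem mul_le_two_mul_sampleProb (hp : ∀ i ∈ T, p i ∈ Set.Icc 0 1)
    (hload : ∀ x, ∑ i ∈ T with x ∈ B i, p i ≤ 1 / 2) {i j : ι} (hi : i ∈ T) (hj : j ∈ T)
    (hij : (intersectionGraph B).Adj i j) :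
    p i * p j ≤
      2 * sampleProb T p fun S => (i, j) ∈ (privateIntersectionGraph S B).interedges S S := by
  obtain ⟨hne, x, hxi, hxj⟩ := hij
  let Q : Finset ι := (T.filter (x ∈ B ·)) \ {i, j}
  have hQT : Q ⊆ T := sdiff_subset.trans (filter_subset _ _)
  have hprod : 1 / 2 ≤ ∏ k ∈ Q, (1 - p k) :=
    calc (1 : ℝ) / 2 ≤ 1 - ∑ k ∈ T with x ∈ B k, p k := by linarith [hload x]
      _ ≤ 1 - ∑ k ∈ Q, p k := sub_le_sub_left (sum_le_sum_of_subset_of_nonneg sdiff_subset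
          fun k hk _ => (hp k (filter_subset _ _ hk)).1) 1
      _ ≤ ∏ k ∈ Q, (1 - p k) := one_sub_sum_le_prod_one_sub fun k hk => hp k (hQT hk)
  have hprob : p i * p j * ∏ k ∈ Q, (1 - p k) ≤
      sampleProb T p fun S => (i, j) ∈ (privateIntersectionGraph S B).interedges S S := by
    rw [← prod_pair hne, ← sampleProb_subset_and_disjoint p
      (insert_subset hi (singleton_subset_iff.2 hj)) hQT disjoint_sdiff]
    refine sampleProb_mono hp fun S hST ⟨hijS, hSQ⟩ => Rel.mem_interedges_iff.2
      ⟨hijS (by simp), hijS (by simp), hne, x, hxi, hxj, fun k hkS hki hkj hxk => ?_⟩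
    exact disjoint_left.1 hSQ hkS
      (mem_sdiff.2 ⟨mem_filter.2 ⟨hST hkS, hxk⟩, by simp [hki, hkj]⟩)
  nlinarith [mul_nonneg (hp i hi).1 (hp j hj).1]

open Classical in
/-- The Clarkson-Shor argument: count the private intersections of a random subfamily. -/
theorem sum_interedges_intersectionGraph_le (hp : ∀ i ∈ T, p i ∈ Set.Icc 0 1)
    (hload : ∀ x, ∑ i ∈ T with x ∈ B i, p i ≤ 1 / 2)
    (hfew : ∀ S ⊆ T, #((privateIntersectionGraph S B).interedges S S) ≤ Λ * #S) :
    ∑ e ∈ (intersectionGraph B).interedges T T, p e.1 * p e.2 ≤ 2 * Λ * ∑ i ∈ T, p i := by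
  let P (S : Finset ι) : Finset (ι × ι) := (privateIntersectionGraph S B).interedges S S
  let Q : Finset (ι × ι) := (intersectionGraph B).interedges T T
  calc ∑ e ∈ Q, p e.1 * p e.2 ≤ ∑ e ∈ Q, 2 * sampleProb T p fun S => e ∈ P S := by
        refine sum_le_sum fun e he => ?_
        obtain ⟨hi, hj, hij⟩ := Rel.mem_interedges_iff.1 he
        exact mul_le_two_mul_sampleProb hp hload hi hj hij
    _ = 2 * ∑ S ∈ T.powerset, sampleWeight T p S * #(Q.filter (· ∈ P S)) := by
        rw [← mul_sum, sum_sampleWeight_mul_card_filter Q fun e S => e ∈ P S]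
    _ ≤ 2 * ∑ S ∈ T.powerset, sampleWeight T p S * (Λ * #S) := by
        refine mul_le_mul_of_nonneg_left (sum_le_sum fun S hS => ?_) zero_le_two
        have hST := mem_powerset.1 hS
        refine mul_le_mul_of_nonneg_left ((Nat.cast_le.2 (card_le_card fun e he => ?_)).trans
          (hfew S hST)) (sampleWeight_nonneg hp hST)
        exact (mem_filter.1 he).2
    _ = 2 * Λ * ∑ i ∈ T, p i := by
        simp only [← sum_sampleWeight_mul_card T p, mul_assoc, mul_sum, mul_left_comm Λ]

end IntersectingPairs

section WeightedIndependentSets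

variable {ι : Type*} {H : SimpleGraph ι} {T : Finset ι} {w : ι → ℝ} {d : ℝ}

open Classical in
theorem exists_sum_adj_le (hw : ∀ i ∈ T, 0 ≤ w i) (hpos : 0 < ∑ i ∈ T, w i)
    (h : ∑ e ∈ H.interedges T T, w e.1 * w e.2 ≤ d * ∑ i ∈ T, w i) :
    ∃ i ∈ T, ∑ j ∈ T with H.Adj i j, w j ≤ d := by
  by_contra! hlt
  obtain ⟨i, hi, hwi⟩ : ∃ i ∈ T, 0 < w i :=
    exists_lt_of_sum_lt (f := fun _ => (0 : ℝ)) (by rwa [sum_const_zero])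
  refine h.not_gt ?_
  calc d * ∑ i ∈ T, w i = ∑ i ∈ T, w i * d := by rw [← sum_mul, mul_comm]
    _ < ∑ i ∈ T, w i * ∑ j ∈ T with H.Adj i j, w j :=
        sum_lt_sum (fun i hi => mul_le_mul_of_nonneg_left (hlt i hi).le (hw i hi))
          ⟨i, hi, mul_lt_mul_of_pos_left (hlt i hi) hwi⟩
    _ = ∑ i ∈ T, ∑ j ∈ T with H.Adj i j, w i * w j := by simp only [mul_sum]
    _ = ∑ e ∈ H.interedges T T, w e.1 * w e.2 := by
        symm
        refine sum_finset_product _ T (fun i => T.filter (H.Adj i)) fun e => ?_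
        simp only [SimpleGraph.mem_interedges_iff, mem_filter]

open Classical in
/-- Repeatedly choose a vertex whose neighbours have weight at most `d`, and discard them. -/
theorem exists_isIndepSet_sum_le (hw : ∀ i ∈ T, w i ∈ Set.Icc 0 1)
    (h : ∀ S ⊆ T, ∑ e ∈ H.interedges S S, w e.1 * w e.2 ≤ d * ∑ i ∈ S, w i) :
    ∃ M ⊆ T, H.IsIndepSet M ∧ ∑ i ∈ T, w i ≤ (d + 1) * #M := by
  induction T using Finset.strongInduction with
  | H T ih =>
    rcases (sum_nonneg fun i hi => (hw i hi).1).eq_or_lt with hzero | hpos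
    · exact ⟨∅, empty_subset T, by simp, by simp [← hzero]⟩
    obtain ⟨i, hi, hd⟩ := exists_sum_adj_le (fun i hi => (hw i hi).1) hpos (h T Subset.rfl)
    let T' : Finset ι := (T.erase i).filter fun j => ¬ H.Adj i j
    have hT'T : T' ⊆ T := (filter_subset _ _).trans (erase_subset _ _)
    have hiT' : i ∉ T' := by simp [T']
    obtain ⟨M, hMT', hM, hsum⟩ := ih T' (hT'T.ssubset_of_mem_notMem hi hiT')
      (fun j hj => hw j (hT'T hj)) fun S hS => h S (hS.trans hT'T)
    refine ⟨insert i M, insert_subset hi (hMT'.trans hT'T), ?_, ?_⟩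
    · have : Std.Symm fun i j => ¬ H.Adj i j := ⟨fun _ _ h => h ∘ SimpleGraph.Adj.symm⟩
      rw [coe_insert, SimpleGraph.isIndepSet_iff, Set.pairwise_insert_of_symm]
      exact ⟨hM, fun j hj _ => (mem_filter.1 (hMT' hj)).2⟩
    · have hnbrs : ∑ j ∈ (T.erase i) with H.Adj i j, w j ≤ d :=
        (sum_le_sum_of_subset_of_nonneg (filter_subset_filter _ (erase_subset i T))
          fun j hj _ => (hw j (filter_subset _ _ hj)).1).trans hd
      rw [card_insert_of_notMem fun hiM => hiT' (hMT' hiM), ← add_sum_erase T w hi,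
        ← sum_filter_add_sum_filter_not (T.erase i) (H.Adj i)]
      push_cast
      linarith [(hw i hi).2]

end WeightedIndependentSets

section BallMatchings

open Classical in
theorem exists_isIndepSet_intersectionGraph {ι V : Type*} {T : Finset ι} {B : ι → Set V}
    {w : ι → ℝ} {Λ : ℝ} (hne : ∀ i ∈ T, (B i).Nonempty) (hw : ∀ i ∈ T, 0 ≤ w i)
    (hload : ∀ x, ∑ i ∈ T with x ∈ B i, w i ≤ 1)
    (hfew : ∀ S ⊆ T, #((privateIntersectionGraph S B).interedges S S) ≤ Λ * #S) :
    ∃ M ⊆ T, (intersectionGraph B).IsIndepSet M ∧ ∑ i ∈ T, w i ≤ (4 * Λ + 1) * #M := by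
  have hw1 : ∀ i ∈ T, w i ≤ 1 := fun i hi => by
    obtain ⟨x, hx⟩ := hne i hi
    exact (single_le_sum (f := w) (fun j hj => hw j (filter_subset _ _ hj))
      (mem_filter.2 ⟨hi, hx⟩)).trans (hload x)
  refine exists_isIndepSet_sum_le (fun i hi => ⟨hw i hi, hw1 i hi⟩) fun S hS => ?_
  have hhalf := sum_interedges_intersectionGraph_le (T := S) (B := B) (p := fun i => w i / 2)
    (fun i hi => ⟨by linarith [hw i (hS hi)], by linarith [hw1 i (hS hi)]⟩)
    (fun x => by
      rw [← sum_div]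
      gcongr
      exact (sum_le_sum_of_subset_of_nonneg (filter_subset_filter _ hS)
        fun i hi _ => hw i (filter_subset _ _ hi)).trans (hload x))
    fun S' hS' => hfew S' (hS'.trans hS)
  have hquarter : ∀ e : ι × ι, w e.1 / 2 * (w e.2 / 2) = w e.1 * w e.2 / 4 := fun e => by ring
  rw [sum_congr rfl fun e _ => hquarter e, ← sum_div, ← sum_div] at hhalf
  linarith

theorem IsBallHypergraph.eq_empty_of_isEmpty {V : Type*} [IsEmpty V] {G : SimpleGraph V}
    {E : Set (Set V)} (hE : IsBallHypergraph G E) : E = ∅ :=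
  Set.eq_empty_of_forall_notMem fun e he => isEmptyElim (hE e he).choose

open Classical in
theorem IsBallHypergraph.exists_pairwise_disjoint_sum_le {V : Type*} {G : SimpleGraph V}
    {T : Finset (Set V)} {w : Set V → ℝ} {r t : ℕ} (hT : IsBallHypergraph G T) (hr : 4 ≤ r)
    (ht : t ≤ 2 ^ r ^ 2) (hG : ¬ GraphMinor (⊤ : SimpleGraph (Fin t)) G)
    (hw : ∀ e ∈ T, 0 ≤ w e) (hload : ∀ v, ∑ e ∈ T with v ∈ e, w e ≤ 1) :
    ∃ M ⊆ T, (M : Set (Set V)).Pairwise Disjoint ∧ ∑ e ∈ T, w e ≤ (2880 * r * t + 9) * #M := by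
  have hdepth : ∀ e ∈ T, ∃ c σ, IsDepthFunction G e c σ := by
    intro e he
    obtain ⟨c, k, rfl⟩ := hT e he
    exact ⟨c, exists_isDepthFunction_gBall G c k⟩
  rcases isEmpty_or_nonempty V
  · obtain rfl : T = ∅ := coe_eq_empty.1 hT.eq_empty_of_isEmpty
    exact ⟨∅, by simp⟩
  choose! c σ hσ using hdepth
  obtain ⟨M, hMT, hM, hsum⟩ := exists_isIndepSet_intersectionGraph (B := id)
    (Λ := 2 * (360 * r * t + 1)) (fun e he => ⟨c e, (hσ e he).center_mem⟩) hw hload fun S hS => by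
      exact_mod_cast card_interedges_privateIntersectionGraph_le (B := id) hr ht hG
        fun e he => hσ e (hS he)
  refine ⟨M, hMT, fun e he f hf hef => ?_, hsum.trans_eq (by ring)⟩
  exact Set.disjoint_iff_inter_eq_empty.2
    (Set.not_nonempty_iff_eq_empty.1 fun h => hM he hf hef ⟨hef, h⟩)

theorem exists_le_two_pow_sq_le_sqrt_log {t : ℕ} (ht : 2 ≤ t) : ∃ r : ℕ, 4 ≤ r ∧ t ≤ 2 ^ r ^ 2 ∧
    (r : ℝ) ≤ 7 * √(Real.log t) ∧ 1 / 2 ≤ √(Real.log t) := by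
  have hlog2 := Real.log_two_gt_d9
  have hlog : Real.log 2 ≤ Real.log t := Real.log_le_log two_pos (by exact_mod_cast ht)
  have hs : 4 / 5 ≤ √(Real.log t) := Real.le_sqrt_of_sq_le (by norm_num at hlog2 ⊢; linarith)
  have hsq := Real.sq_sqrt (show 0 ≤ Real.log t by linarith)
  set s := √(Real.log t)
  have hle := Nat.le_ceil (5 * s)
  have hlt := Nat.ceil_lt_add_one (show 0 ≤ 5 * s by linarith)
  refine ⟨⌈5 * s⌉₊, ?_, ?_, by linarith, by linarith⟩
  · have : (4 : ℝ) ≤ ⌈5 * s⌉₊ := by linarith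
    exact_mod_cast this
  · have hlog_le : Real.log t ≤ Real.log ((2 : ℝ) ^ ⌈5 * s⌉₊ ^ 2) := by
      rw [Real.log_pow]
      push_cast
      have : (5 * s) ^ 2 ≤ (⌈5 * s⌉₊ : ℝ) ^ 2 := pow_le_pow_left₀ (by linarith) hle 2
      nlinarith
    exact_mod_cast (Real.log_le_log_iff (by positivity) (by positivity)).1 hlog_le

open Classical in
theorem nuStar_le_const_Kt_general :
    ∃ c : ℝ, 0 < c ∧
      ∀ (t : ℕ) (V : Type u) (G : SimpleGraph V) (T : Finset (Set V)) (w : Set V → ℝ),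
        ¬ GraphMinor (⊤ : SimpleGraph (Fin t)) G →
        IsBallHypergraph G T →
        (∀ e ∈ T, 0 ≤ w e) →
        (∀ v, ∑ e ∈ T with v ∈ e, w e ≤ 1) →
          ∃ M ⊆ T, (M : Set (Set V)).Pairwise Disjoint ∧
            ∑ e ∈ T, w e ≤ c * t * √(Real.log t) * #M := by
  refine ⟨20169, by norm_num, fun t V G T w hG hT hw hload => ?_⟩
  rcases lt_or_ge t 2 with ht | ht
  · have : Subsingleton (Fin t) := Fin.subsingleton_iff_le_one.2 (by omega)
    have : IsEmpty V := not_nonempty_iff.1 fun h => hG (.of_subsingleton _ _ fun _ => h)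
    obtain rfl : T = ∅ := coe_eq_empty.1 hT.eq_empty_of_isEmpty
    exact ⟨∅, by simp⟩
  · obtain ⟨r, hr, htr, hrs, hs⟩ := exists_le_two_pow_sq_le_sqrt_log ht
    obtain ⟨M, hMT, hM, hsum⟩ := hT.exists_pairwise_disjoint_sum_le hr htr hG hw hload
    refine ⟨M, hMT, hM, hsum.trans (mul_le_mul_of_nonneg_right ?_ (Nat.cast_nonneg _))⟩
    have ht' : (2 : ℝ) ≤ t := by exact_mod_cast ht
    calc (2880 * r * t + 9 : ℝ) ≤ 2880 * (7 * √(Real.log t)) * t + 9 * (t * √(Real.log t)) := by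
          gcongr
          nlinarith
      _ = 20169 * t * √(Real.log t) := by ring

section MatchingNumber

variable {V : Type*} [Fintype V] {E : Set (Set V)} {w : Set V → ℝ}

theorem card_le_matchingNumber {M : Finset (Set V)} (hME : ↑M ⊆ E)
    (hM : (M : Set (Set V)).Pairwise Disjoint) : #M ≤ matchingNumber E := by
  refine le_csSup ⟨Fintype.card (Set V), ?_⟩ ⟨M, hME, hM, rfl⟩
  rintro n ⟨M', -, -, rfl⟩
  exact card_le_univ M'

open Classical in
theorem IsFractionalMatching.sum_filter_mem_le_one (hw : IsFractionalMatching E w) (v : V) :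
    ∑ e ∈ E.toFinset with v ∈ e, w e ≤ 1 := by
  refine le_trans ?_ (hw.2.2 v)
  simp only [Set.indicator_apply, Set.mem_ofPred_eq, ← sum_filter]
  exact sum_le_sum_of_subset_of_nonneg (filter_subset_filter _ (subset_univ _)) fun e _ _ => hw.1 e

open Classical in
theorem IsFractionalMatching.sum_le_mul_matchingNumber {C : ℝ} (hw : IsFractionalMatching E w)
    (hC : 0 ≤ C) (h : ∃ M ⊆ E.toFinset, (M : Set (Set V)).Pairwise Disjoint ∧
      ∑ e ∈ E.toFinset, w e ≤ C * #M) : ∑ e, w e ≤ C * matchingNumber E := by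
  obtain ⟨M, hME, hM, hsum⟩ := h
  calc ∑ e, w e = ∑ e ∈ E.toFinset, w e := (sum_subset (subset_univ _) fun e _ he =>
        hw.2.1 e fun heE => he (Set.mem_toFinset.2 heE)).symm
    _ ≤ C * #M := hsum
    _ ≤ C * matchingNumber E := by
        gcongr
        exact card_le_matchingNumber (fun e he => Set.mem_toFinset.1 (hME he)) hM

end MatchingNumber

end BallMatchings

/-- There is an absolute constant `c > 0` such that for every integer `t ≥ 1`, every
graph `G` with no `K_t` minor, and every ball hypergraph `𝓗` of `G`, the fractional
matching number satisfies `ν*(𝓗) ≤ c·t·√(log t)·ν(𝓗)`: every fractional matching has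
total weight at most `c·t·√(log t)·ν(𝓗)`. -/
theorem nuStar_le_const_Kt :
    ∃ c : ℝ, 0 < c ∧
      ∀ t : ℕ, 1 ≤ t →
        ∀ (V : Type) [Fintype V] (G : SimpleGraph V) (E : Set (Set V)),
          ¬ GraphMinor (⊤ : SimpleGraph (Fin t)) G →
          IsBallHypergraph G E →
          ∀ w : Set V → ℝ, IsFractionalMatching E w →
            ∑ e : Set V, w e ≤
              c * (t : ℝ) * Real.sqrt (Real.log t) * (matchingNumber E : ℝ) := by
  classical
  obtain ⟨c, hc, hbound⟩ := nuStar_le_const_Kt_general.{0}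
  exact ⟨c, hc, fun t _ V _ G E hG hE w hw => hw.sum_le_mul_matchingNumber (by positivity)
    (hbound t V G E.toFinset w hG (by rwa [Set.coe_toFinset]) (fun e _ => hw.1 e)
      hw.sum_filter_mem_le_one)⟩
end

section
/- There is no function f : ℕ → ℕ such that τ(𝓗) ≤ f(ν(𝓗)) for every ball hypergraph 𝓗 of a subgraph of the strong product of two paths. More precisely, for every integer k ≥ 3 there exist a graph G that is a subgraph of the strong product of two paths and an integer ℓ ≥ 0 such that the ℓ-ball hypergraph 𝓗 of G consisting of all balls of radius ℓ in G satisfies ν(𝓗) = 1 and τ(𝓗) ≥ k/2. -/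
/-- The strong product of two graphs: `(u₁,u₂)` is adjacent to `(v₁,v₂)` iff the two
pairs are distinct and, for each coordinate, the entries are equal or adjacent. -/
def strongProd {α β : Type*} (G₁ : SimpleGraph α) (G₂ : SimpleGraph β) :
    SimpleGraph (α × β) :=
  SimpleGraph.fromRel fun x y =>
    (x.1 = y.1 ∨ G₁.Adj x.1 y.1) ∧ (x.2 = y.2 ∨ G₂.Adj x.2 y.2)

/-!
Give the vertices of a king's grid labels, and keep an edge only if its ends have the same label
or one of them lies in the last row. The top rows repeat one sorted word; going down, each row
arises from the previous one by swapping neighbouring letters, until the last labelled row is a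
word in which every pair of labels occurs consecutively.

The distance from the first row to the last row is equal to the radius `ℓ`. So the `ℓ`-ball around
a vertex of the first row sees only its own label until it runs out of length at the last row, and
every vertex lies in balls of at most three labels: the transversal number is large. Conversely,
in the sorted rows each label occupies an interval, so a center near the top can reach, without
losing height, every vertex of the last labelled row that carries its label; as any two labels occur
there side by side, the two balls meet in the last row. A center further down has radius to spare,
enough to cover the whole last row.
-/

/-! ### Balls, matchings and transversals -/

section Ball

variable {V : Type*} {G : SimpleGraph V} {u v w : V} {d e r : ℕ}

theorem mem_gBall_iff_exists_walk : v ∈ G.gBall u r ↔ ∃ p : G.Walk u v, p.length ≤ r := by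
  constructor
  · rintro ⟨huv, hr⟩
    obtain ⟨p, hp⟩ := huv.exists_walk_length_eq_dist
    exact ⟨p, hp.trans_le hr⟩
  · rintro ⟨p, hp⟩
    exact ⟨⟨p⟩, (SimpleGraph.dist_le p).trans hp⟩

theorem mem_gBall_self (v : V) (r : ℕ) : v ∈ G.gBall v r :=
  mem_gBall_iff_exists_walk.2 ⟨.nil, r.zero_le⟩

theorem mem_gBall_of_add_le (hv : v ∈ G.gBall u d) (hw : w ∈ G.gBall v e) (hr : d + e ≤ r) :
    w ∈ G.gBall u r := by
  obtain ⟨p, hp⟩ := mem_gBall_iff_exists_walk.1 hv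
  obtain ⟨q, hq⟩ := mem_gBall_iff_exists_walk.1 hw
  exact mem_gBall_iff_exists_walk.2
    ⟨p.append q, (p.length_append q).trans_le ((add_le_add hp hq).trans hr)⟩

theorem gBall_mono (v : V) : Monotone (G.gBall v) :=
  fun _ _ h _ hw => ⟨hw.1, hw.2.trans h⟩

/-- The hypergraph of all balls of radius `r` in `G`. -/
def ballHypergraph (G : SimpleGraph V) (r : ℕ) : Set (Set V) :=
  {e | ∃ v, e = G.gBall v r}

theorem isBallHypergraph_ballHypergraph (G : SimpleGraph V) (r : ℕ) :
    IsBallHypergraph G (ballHypergraph G r) := by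
  rintro _ ⟨v, rfl⟩
  exact ⟨v, r, rfl⟩

end Ball

theorem matchingNumber_eq_one {V : Type*} [Fintype V] {E : Set (Set V)} (hne : E.Nonempty)
    (hE : E.Pairwise fun e e' => ¬Disjoint e e') : matchingNumber E = 1 := by
  refine IsGreatest.csSup_eq ⟨?_, ?_⟩
  · obtain ⟨e, he⟩ := hne
    exact ⟨{e}, by simpa using he, by simp, Finset.card_singleton e⟩
  · rintro _ ⟨M, hME, hM, rfl⟩
    refine Finset.card_le_one.2 fun e he e' he' => ?_
    by_contra hee'
    exact hE (hME he) (hME he') hee' (hM he he' hee')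

theorem exists_card_eq_transversalNumber {V : Type*} [Fintype V] {E : Set (Set V)}
    (hE : ∀ e ∈ E, e.Nonempty) :
    ∃ T : Finset V, (∀ e ∈ E, ∃ v ∈ T, v ∈ e) ∧ T.card = transversalNumber E :=
  Nat.sInf_mem (s := {n | ∃ T : Finset V, (∀ e ∈ E, ∃ v ∈ T, v ∈ e) ∧ T.card = n})
    ⟨_, Finset.univ, fun e he => (hE e he).imp fun v hv => ⟨Finset.mem_univ v, hv⟩, rfl⟩

theorem card_le_transversalNumber_mul {V ι : Type*} [Fintype V] [Fintype ι] {E : Set (Set V)}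
    {b : ι → Set V} {c : ℕ} (hE : ∀ e ∈ E, e.Nonempty) (hb : ∀ i, b i ∈ E)
    (hc : ∀ v, {i | v ∈ b i}.ncard ≤ c) : Fintype.card ι ≤ transversalNumber E * c := by
  classical
  obtain ⟨T, hT, hcard⟩ := exists_card_eq_transversalNumber hE
  calc Fintype.card ι ≤ (T.biUnion fun v => {i | v ∈ b i}).card :=
        Finset.card_le_card fun i _ => by simpa using hT (b i) (hb i)
    _ ≤ T.card * c := Finset.card_biUnion_le_card_mul _ _ _ fun v _ => by
        simpa [← Set.ncard_coe_finset] using hc v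
    _ = transversalNumber E * c := by rw [hcard]

/-! ### Words and neighbouring swaps -/

theorem exists_mem_uIcc_dist_le {n d : ℕ} {a b : Fin n} (h : Nat.dist a b ≤ d + 1) :
    ∃ c ∈ Set.uIcc a b, Nat.dist a c ≤ 1 ∧ Nat.dist c b ≤ d := by
  unfold Nat.dist at *
  rcases lt_trichotomy a b with hab | rfl | hab
  · refine ⟨⟨a + 1, by omega⟩, Set.mem_uIcc.2 (.inl ?_), ?_⟩ <;>
      simp only [Fin.le_def] <;> omega
  · exact ⟨a, Set.left_mem_uIcc, by omega⟩
  · refine ⟨⟨a - 1, by omega⟩, Set.mem_uIcc.2 (.inr ?_), ?_⟩ <;>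
      simp only [Fin.le_def] <;> omega

theorem ncard_setOf_dist_le (n b d : ℕ) : {x : Fin n | Nat.dist x b ≤ d}.ncard ≤ 2 * d + 1 := by
  calc {x : Fin n | Nat.dist x b ≤ d}.ncard ≤ (Finset.Icc (b - d) (b + d) : Set ℕ).ncard := by
        refine Set.ncard_le_ncard_of_injOn Fin.val (fun x hx => ?_) Fin.val_injective.injOn
        simp only [Set.mem_ofPred_eq, Nat.dist, Finset.coe_Icc, Set.mem_Icc] at hx ⊢
        omega
    _ ≤ 2 * d + 1 := by
        rw [Set.ncard_coe_finset, Nat.card_Icc]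
        omega

theorem exists_seq_of_reflTransGen {α : Type*} {r : α → α → Prop} [Std.Refl r] {a b : α}
    (h : Relation.ReflTransGen r a b) :
    ∃ (m : ℕ) (L : ℕ → α), L 0 = a ∧ L m = b ∧ ∀ t, r (L t) (L (t + 1)) := by
  induction h using Relation.ReflTransGen.head_induction_on with
  | refl => exact ⟨0, fun _ => b, rfl, rfl, fun _ => refl b⟩
  | @head a c hac _ ih =>
    obtain ⟨m, L, hL₀, hLm, hL⟩ := ih
    refine ⟨m + 1, fun t => Nat.casesOn t a L, rfl, hLm, fun t => ?_⟩
    cases t with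
    | zero => simpa only [hL₀] using! hac
    | succ t => exact hL t

/-- The word `f` is obtained from `f'` by permuting positions in such a way that no letter moves by
more than one position. -/
def AdjacentShift {n : ℕ} {κ : Type*} (f f' : Fin n → κ) : Prop :=
  ∃ s : Equiv.Perm (Fin n), (∀ x : Fin n, Nat.dist x (s x) ≤ 1) ∧ f = f' ∘ s

instance {n : ℕ} {κ : Type*} : Std.Refl (AdjacentShift (n := n) (κ := κ)) :=
  ⟨fun _ => ⟨1, by simp [Nat.dist_self], rfl⟩⟩

theorem AdjacentShift.range_eq {n : ℕ} {κ : Type*} {f f' : Fin n → κ} (hf : AdjacentShift f f') :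
    Set.range f = Set.range f' := by
  obtain ⟨s, -, rfl⟩ := hf
  exact s.surjective.range_comp f'

theorem adjacentShift_comp_swap {n : ℕ} {κ : Type*} (f : Fin (n + 1) → κ) (i : Fin n) :
    AdjacentShift (f ∘ Equiv.swap i.castSucc i.succ) f := by
  refine ⟨_, fun x => ?_, rfl⟩
  rw [Equiv.swap_apply_def]
  split_ifs with h h' <;> simp [Nat.dist, *]

theorem reflTransGen_adjacentShift_comp_perm {n : ℕ} {κ : Type*} (f : Fin n → κ)
    (σ : Equiv.Perm (Fin n)) : Relation.ReflTransGen AdjacentShift (f ∘ σ) f := by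
  obtain _ | n := n
  · rw [Subsingleton.elim (f ∘ σ) f]
  have hσ : σ ∈ Submonoid.closure
      (Set.range fun i : Fin n => Equiv.swap i.castSucc i.succ) := by
    rw [Equiv.Perm.mclosure_swap_castSucc_succ]
    exact Submonoid.mem_top σ
  induction hσ using Submonoid.closure_induction generalizing f with
  | one => exact .refl
  | mul σ τ _ _ hσ hτ => exact (hτ (f ∘ σ)).trans (hσ f)
  | mem σ hσ =>
    obtain ⟨i, rfl⟩ := hσ
    exact .single (adjacentShift_comp_swap f i)

/-- Every ordered pair of letters, repetitions included, occurs at two consecutive positions of the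
word `f`. -/
def ContainsAllPairs {n : ℕ} {κ : Type*} (f : Fin n → κ) : Prop :=
  ∀ i j, ∃ z z' : Fin n, (z' : ℕ) = z + 1 ∧ f z = i ∧ f z' = j

theorem exists_containsAllPairs (κ : Type*) [Finite κ] :
    ∃ (n : ℕ) (f : Fin n → κ), ContainsAllPairs f := by
  have := Fintype.ofFinite κ
  let l : List κ := ((Finset.univ : Finset (κ × κ)).toList.map fun p => [p.1, p.2]).flatten
  refine ⟨l.length, l.get, fun i j => ?_⟩
  obtain ⟨s, t, hst⟩ : [i, j] <:+: l :=
    List.infix_of_mem_flatten (List.mem_map.2 ⟨(i, j), by simp, rfl⟩)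
  have hlen : l.length = s.length + (t.length + 2) := by simp [← hst]
  exact ⟨⟨s.length, by omega⟩, ⟨s.length + 1, by omega⟩, rfl, by simp [← hst], by simp [← hst]⟩

/-- The rows `Λ 0, …, Λ h` lead, by letters moving at most one position at a time, from a sorted
word of length `n` to a word containing all pairs of letters. The sorted word is repeated `2 * n`
times: the rows `0, …, n - 1` contain the centers near the top, and from each of them the next `n`
rows leave room to reach any position in the word by diagonal steps. -/
structure IsMixing {n : ℕ} {κ : Type*} [Preorder κ] (h : ℕ) (Λ : ℕ → Fin n → κ) : Prop where
  adjacentShift : ∀ y, AdjacentShift (Λ y) (Λ (y + 1))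
  monotone_zero : Monotone (Λ 0)
  eq_zero : ∀ y ≤ 2 * n, Λ y = Λ 0
  two_mul_le : 2 * n ≤ h
  containsAllPairs : ContainsAllPairs (Λ h)

theorem exists_isMixing (κ : Type*) [Finite κ] [LinearOrder κ] :
    ∃ (n h : ℕ) (Λ : ℕ → Fin n → κ), IsMixing h Λ := by
  obtain ⟨n, f, hf⟩ := exists_containsAllPairs κ
  obtain ⟨m, L, hL₀, hLm, hL⟩ :=
    exists_seq_of_reflTransGen (reflTransGen_adjacentShift_comp_perm f (Tuple.sort f))
  refine ⟨n, 2 * n + m, fun y => L (y - 2 * n), fun y => ?_, ?_, fun y hy => ?_, by omega, ?_⟩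
  · rcases lt_or_ge y (2 * n) with hy | hy
    · rw [Nat.sub_eq_zero_of_le hy, Nat.sub_eq_zero_of_le hy.le]
      exact refl (L 0)
    · rw [Nat.sub_add_comm hy]
      exact hL _
  · rw [Nat.zero_sub, hL₀]
    exact Tuple.monotone_sort f
  · rw [Nat.sub_eq_zero_of_le hy, Nat.zero_sub]
  · rwa [Nat.add_sub_cancel_left, hLm]

theorem IsMixing.surjective_zero {n h : ℕ} {κ : Type*} [Preorder κ] {Λ : ℕ → Fin n → κ}
    (hΛ : IsMixing h Λ) : Function.Surjective (Λ 0) := by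
  have hrange : ∀ y, Set.range (Λ 0) = Set.range (Λ y) := by
    intro y
    induction y with
    | zero => rfl
    | succ y ih => exact ih.trans (hΛ.adjacentShift y).range_eq
  have hsurj : Function.Surjective (Λ h) := fun i =>
    let ⟨z, _, _, hz, _⟩ := hΛ.containsAllPairs i i
    ⟨z, hz⟩
  rw [← Set.range_eq_univ, hrange h, hsurj.range_eq]

/-! ### The labelled grid -/

theorem strongProd_pathGraph_adj {m n : ℕ} {u v : Fin m × Fin n} :
    (strongProd (SimpleGraph.pathGraph m) (SimpleGraph.pathGraph n)).Adj u v ↔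
      u ≠ v ∧ Nat.dist u.1 v.1 ≤ 1 ∧ Nat.dist u.2 v.2 ≤ 1 := by
  simp only [strongProd, SimpleGraph.fromRel_adj, SimpleGraph.pathGraph_adj, Fin.ext_iff, Nat.dist]
  refine and_congr_right fun _ => ?_
  omega

/-- The subgraph of the king's grid with rows `0, …, h + 1` of length `n` in which, except at the
vertices of the last row, only vertices with the same label are joined. The vertex `(y, x)` has the
label `Λ y x`; labels of the last row are immaterial. -/
def labelledGrid {n : ℕ} {κ : Type*} (h : ℕ) (Λ : ℕ → Fin n → κ) :
    SimpleGraph (Fin (h + 2) × Fin n) :=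
  strongProd (SimpleGraph.pathGraph (h + 2)) (SimpleGraph.pathGraph n) ⊓
    SimpleGraph.fromRel fun u v => Λ u.1 u.2 = Λ v.1 v.2 ∨ u.1 = Fin.last (h + 1)

section LabelledGrid

variable {n h d : ℕ} {κ : Type*} {Λ : ℕ → Fin n → κ} {u v : Fin (h + 2) × Fin n}

theorem labelledGrid_adj :
    (labelledGrid h Λ).Adj u v ↔ u ≠ v ∧ Nat.dist u.1 v.1 ≤ 1 ∧ Nat.dist u.2 v.2 ≤ 1 ∧
      (Λ u.1 u.2 = Λ v.1 v.2 ∨ u.1 = Fin.last (h + 1) ∨ v.1 = Fin.last (h + 1)) := by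
  rw [labelledGrid, SimpleGraph.inf_adj, strongProd_pathGraph_adj, SimpleGraph.fromRel_adj,
    eq_comm (a := Λ v.1 v.2)]
  tauto

theorem mem_gBall_labelledGrid_one (h₁ : Nat.dist u.1 v.1 ≤ 1) (h₂ : Nat.dist u.2 v.2 ≤ 1)
    (hΛ : Λ u.1 u.2 = Λ v.1 v.2 ∨ u.1 = Fin.last (h + 1) ∨ v.1 = Fin.last (h + 1)) :
    v ∈ (labelledGrid h Λ).gBall u 1 := by
  rcases eq_or_ne u v with rfl | huv
  · exact mem_gBall_self u 1
  · exact mem_gBall_iff_exists_walk.2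
      ⟨(labelledGrid_adj.2 ⟨huv, h₁, h₂, hΛ⟩).toWalk, by simp⟩

theorem last_mem_gBall_last {a b : Fin n} (hab : Nat.dist a b ≤ d) :
    (Fin.last (h + 1), b) ∈ (labelledGrid h Λ).gBall (Fin.last (h + 1), a) d := by
  induction d generalizing a with
  | zero =>
    obtain rfl : a = b := Fin.ext (Nat.eq_of_dist_eq_zero (Nat.le_zero.1 hab))
    exact mem_gBall_self _ 0
  | succ d ih =>
    obtain ⟨c, -, hac, hcb⟩ := exists_mem_uIcc_dist_le hab
    have hstep : (Fin.last (h + 1), c) ∈ (labelledGrid h Λ).gBall (Fin.last (h + 1), a) 1 :=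
      mem_gBall_labelledGrid_one (by simp [Nat.dist_self]) hac (.inr (.inl rfl))
    exact mem_gBall_of_add_le hstep (ih hcb) (by omega)

theorem exists_perm_mem_gBall (hΛ : ∀ y, AdjacentShift (Λ y) (Λ (y + 1))) {y y' : Fin (h + 2)}
    (hy : (y' : ℕ) = y + d) :
    ∃ s : Equiv.Perm (Fin n), Λ y = Λ y' ∘ s ∧
      ∀ x, (y', s x) ∈ (labelledGrid h Λ).gBall (y, x) d := by
  induction d generalizing y with
  | zero =>
    obtain rfl : y' = y := Fin.ext hy
    exact ⟨1, rfl, fun x => mem_gBall_self _ 0⟩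
  | succ d ih =>
    let w : Fin (h + 2) := ⟨y + 1, by omega⟩
    obtain ⟨s, hs, hys⟩ : AdjacentShift (Λ y) (Λ w) := hΛ y
    obtain ⟨s', hws', hs'⟩ := ih (y := w) (by simp only [w]; omega)
    refine ⟨s.trans s', by rw [hys, hws']; rfl, fun x => ?_⟩
    have hstep : (w, s x) ∈ (labelledGrid h Λ).gBall (y, x) 1 :=
      mem_gBall_labelledGrid_one (by simp [w, Nat.dist]) (hs x) (.inl (congrFun hys x))
    exact mem_gBall_of_add_le hstep (hs' (s x)) (by omega)

theorem exists_last_mem_gBall (hΛ : ∀ y, AdjacentShift (Λ y) (Λ (y + 1)))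
    (u : Fin (h + 2) × Fin n) :
    ∃ a, (Fin.last (h + 1), a) ∈ (labelledGrid h Λ).gBall u (h + 1 - u.1) := by
  obtain ⟨s, -, hs⟩ := exists_perm_mem_gBall hΛ (y := u.1) (y' := Fin.last (h + 1))
    (d := h + 1 - u.1) (by simp; omega)
  exact ⟨s u.2, hs u.2⟩

theorem mem_gBall_of_monotone [PartialOrder κ] {t : ℕ} (hmono : Monotone (Λ 0))
    (hconst : ∀ y ≤ t, Λ y = Λ 0) (hvt : v.1 ≤ t) (h₁ : (v.1 : ℕ) = u.1 + d)
    (h₂ : Nat.dist u.2 v.2 ≤ d) (huv : Λ 0 u.2 = Λ 0 v.2) :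
    v ∈ (labelledGrid h Λ).gBall u d := by
  induction d generalizing u with
  | zero =>
    obtain rfl : v = u :=
      Prod.ext (Fin.ext h₁) (Fin.ext (Nat.eq_of_dist_eq_zero (Nat.le_zero.1 h₂)).symm)
    exact mem_gBall_self v 0
  | succ d ih =>
    obtain ⟨c, hc, huc, hcv⟩ := exists_mem_uIcc_dist_le h₂
    have hΛc : Λ 0 c = Λ 0 v.2 := by
      rcases Set.mem_uIcc.1 hc with ⟨h, h'⟩ | ⟨h, h'⟩
      · exact (hmono h').antisymm (huv ▸ hmono h)
      · exact (huv ▸ hmono h').antisymm (hmono h)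
    let w : Fin (h + 2) × Fin n := (⟨u.1 + 1, by omega⟩, c)
    have hlabel : Λ u.1 u.2 = Λ w.1 w.2 := by
      rw [hconst u.1 (by omega), hconst w.1 (by simp only [w]; omega), huv, ← hΛc]
    have hstep : w ∈ (labelledGrid h Λ).gBall u 1 :=
      mem_gBall_labelledGrid_one (by simp [w, Nat.dist]) huc (.inl hlabel)
    exact mem_gBall_of_add_le hstep (ih (by simp only [w]; omega) hcv hΛc) (by omega)

theorem last_mem_gBall_of_label_eq [PartialOrder κ] (hΛ : IsMixing h Λ) {z a : Fin n}
    (hu : u.1 ≤ n) (hz : Λ h z = Λ 0 u.2) (hza : Nat.dist z a ≤ 1) :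
    (Fin.last (h + 1), a) ∈ (labelledGrid h Λ).gBall u (h + 1) := by
  have hn := hΛ.two_mul_le
  let y : Fin (h + 2) := ⟨2 * n, by omega⟩
  let y' : Fin (h + 2) := (Fin.last h).castSucc
  obtain ⟨s, hyy', hs⟩ := exists_perm_mem_gBall hΛ.adjacentShift (y := y) (y' := y')
    (d := h - 2 * n) (by simp only [y, y', Fin.val_castSucc, Fin.val_last]; omega)
  have hsorted : (y, s.symm z) ∈ (labelledGrid h Λ).gBall u (2 * n - u.1) := by
    refine mem_gBall_of_monotone hΛ.monotone_zero hΛ.eq_zero le_rfl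
      (by simp only [y]; omega) (by simp only [Nat.dist]; omega) ?_
    rw [← hz, ← hΛ.eq_zero y le_rfl, hyy']
    simp [y']
  have hword : (y', z) ∈ (labelledGrid h Λ).gBall u (h - u.1) :=
    mem_gBall_of_add_le hsorted (by simpa using hs (s.symm z)) (by omega)
  have hlast : (Fin.last (h + 1), a) ∈ (labelledGrid h Λ).gBall (y', z) 1 :=
    mem_gBall_labelledGrid_one (by simp [y', Nat.dist]) hza (.inr (.inr rfl))
  exact mem_gBall_of_add_le hword hlast (by omega)

theorem not_disjoint_gBall_of_le (hΛ : ∀ y, AdjacentShift (Λ y) (Λ (y + 1))) (hu : n ≤ u.1)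
    (v : Fin (h + 2) × Fin n) :
    ¬Disjoint ((labelledGrid h Λ).gBall u (h + 1)) ((labelledGrid h Λ).gBall v (h + 1)) := by
  obtain ⟨a, ha⟩ := exists_last_mem_gBall hΛ u
  obtain ⟨b, hb⟩ := exists_last_mem_gBall hΛ v
  have hab : (Fin.last (h + 1), b) ∈ (labelledGrid h Λ).gBall (Fin.last (h + 1), a) n :=
    last_mem_gBall_last (by simp only [Nat.dist]; omega)
  exact Set.not_disjoint_iff.2
    ⟨_, mem_gBall_of_add_le ha hab (by omega), gBall_mono v (Nat.sub_le _ _) hb⟩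

theorem not_disjoint_gBall [PartialOrder κ] (hΛ : IsMixing h Λ) (u v : Fin (h + 2) × Fin n) :
    ¬Disjoint ((labelledGrid h Λ).gBall u (h + 1)) ((labelledGrid h Λ).gBall v (h + 1)) := by
  rcases le_total n u.1 with hu | hu
  · exact not_disjoint_gBall_of_le hΛ.adjacentShift hu v
  rcases le_total n v.1 with hv | hv
  · exact fun huv => not_disjoint_gBall_of_le hΛ.adjacentShift hv u huv.symm
  obtain ⟨z, z', hzz', hz, hz'⟩ := hΛ.containsAllPairs (Λ 0 u.2) (Λ 0 v.2)
  exact Set.not_disjoint_iff.2 ⟨(Fin.last (h + 1), z),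
    last_mem_gBall_of_label_eq hΛ hu hz (by simp [Nat.dist_self]),
    last_mem_gBall_of_label_eq hΛ hv hz' (by simp [hzz', Nat.dist])⟩

/-- Above the last row `v.1 - h = 0` forces `x = v.2`; in the last row `v.1 - h = 1`. -/
theorem exists_label_eq_of_walk (p : (labelledGrid h Λ).Walk u v) (hu : u.1 ≤ h)
    (hp : u.1 + p.length ≤ h + 1) :
    ∃ x : Fin n, Nat.dist x v.2 ≤ v.1 - h ∧ Λ (min v.1 h) x = Λ u.1 u.2 := by
  induction p with
  | @nil u => exact ⟨u.2, by simp [Nat.dist_self], by rw [min_eq_left hu]⟩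
  | @cons u w v huw p ih =>
    obtain ⟨-, h₁, h₂, hlabel⟩ := labelledGrid_adj.1 huw
    rw [SimpleGraph.Walk.length_cons] at hp
    simp only [Fin.ext_iff, Fin.val_last, Nat.dist] at h₁ hlabel
    rcases Nat.lt_or_ge h w.1 with hw | hw
    · obtain rfl : w = v := p.eq_of_length_eq_zero (by omega)
      refine ⟨u.2, by omega, ?_⟩
      rw [min_eq_right hw.le, show (u.1 : ℕ) = h by omega]
    · have huw : Λ u.1 u.2 = Λ w.1 w.2 := hlabel.resolve_right (by omega)
      simpa only [huw] using ih hw (by omega)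

theorem ncard_labels_le (v : Fin (h + 2) × Fin n) :
    {i | ∃ x, Λ 0 x = i ∧ v ∈ (labelledGrid h Λ).gBall (0, x) (h + 1)}.ncard ≤ 3 := by
  let N : Set (Fin n) := {x | Nat.dist x v.2 ≤ v.1 - h}
  calc _ ≤ (Λ (min v.1 h) '' N).ncard := by
        refine Set.ncard_le_ncard ?_ (N.toFinite.image _)
        rintro _ ⟨x, rfl, hx⟩
        obtain ⟨p, hp⟩ := mem_gBall_iff_exists_walk.1 hx
        exact exists_label_eq_of_walk p h.zero_le (by simpa using hp)
    _ ≤ N.ncard := Set.ncard_image_le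
    _ ≤ 2 * (v.1 - h) + 1 := ncard_setOf_dist_le n v.2 (v.1 - h)
    _ ≤ 3 := by omega

theorem labelledGrid_le_strongProd (h : ℕ) (Λ : ℕ → Fin n → κ) :
    labelledGrid h Λ ≤
      strongProd (SimpleGraph.pathGraph (h + 2)) (SimpleGraph.pathGraph n) :=
  inf_le_left

theorem matchingNumber_labelledGrid [PartialOrder κ] [Nonempty κ] (hΛ : IsMixing h Λ) :
    matchingNumber (ballHypergraph (labelledGrid h Λ) (h + 1)) = 1 := by
  refine matchingNumber_eq_one ?_ ?_
  · obtain ⟨x, -⟩ := hΛ.surjective_zero (Classical.arbitrary κ)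
    exact ⟨_, (0, x), rfl⟩
  · rintro _ ⟨u, rfl⟩ _ ⟨v, rfl⟩ -
    exact not_disjoint_gBall hΛ u v

theorem card_le_transversalNumber_labelledGrid [Fintype κ] (hΛ : Function.Surjective (Λ 0)) :
    Fintype.card κ ≤ transversalNumber (ballHypergraph (labelledGrid h Λ) (h + 1)) * 3 := by
  choose x hx using hΛ
  refine card_le_transversalNumber_mul (b := fun i => (labelledGrid h Λ).gBall (0, x i) (h + 1))
    ?_ (fun i => ⟨_, rfl⟩) fun v => ?_
  · rintro _ ⟨v, rfl⟩
    exact ⟨v, mem_gBall_self v _⟩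
  · refine (Set.ncard_le_ncard ?_ ?_).trans (ncard_labels_le (Λ := Λ) v)
    · exact fun i hi => ⟨x i, hx i, hi⟩
    · exact Set.toFinite _

end LabelledGrid

theorem exists_matchingNumber_eq_one_and_le_transversalNumber (k : ℕ) :
    ∃ (m₁ m₂ : ℕ) (G : SimpleGraph (Fin m₁ × Fin m₂)) (ℓ : ℕ),
      G ≤ strongProd (SimpleGraph.pathGraph m₁) (SimpleGraph.pathGraph m₂) ∧
      matchingNumber (ballHypergraph G ℓ) = 1 ∧ k ≤ transversalNumber (ballHypergraph G ℓ) := by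
  obtain ⟨n, h, Λ, hΛ⟩ := exists_isMixing (Fin (k * 3 + 1))
  have hcard := card_le_transversalNumber_labelledGrid (h := h) hΛ.surjective_zero
  rw [Fintype.card_fin] at hcard
  exact ⟨h + 2, n, labelledGrid h Λ, h + 1, labelledGrid_le_strongProd h Λ,
    matchingNumber_labelledGrid hΛ, by omega⟩

/-- There is no function `f : ℕ → ℕ` such that `τ(𝓗) ≤ f(ν(𝓗))` for every ball
hypergraph `𝓗` of a subgraph of the strong product of two paths. More precisely, for
every integer `k ≥ 3` there are a subgraph `G` of the strong product of two paths and
an integer `ℓ ≥ 0` such that the `ℓ`-ball hypergraph `𝓗` of `G` consisting of all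
balls of radius `ℓ` in `G` satisfies `ν(𝓗) = 1` and `τ(𝓗) ≥ k/2`. -/
theorem no_ErdosPosa_for_strong_products_of_paths :
    (¬ ∃ f : ℕ → ℕ,
        ∀ (m₁ m₂ : ℕ) (G : SimpleGraph (Fin m₁ × Fin m₂)),
          G ≤ strongProd (SimpleGraph.pathGraph m₁) (SimpleGraph.pathGraph m₂) →
          ∀ E : Set (Set (Fin m₁ × Fin m₂)), IsBallHypergraph G E →
            transversalNumber E ≤ f (matchingNumber E)) ∧
    ∀ k : ℕ, 3 ≤ k →
      ∃ (m₁ m₂ : ℕ) (G : SimpleGraph (Fin m₁ × Fin m₂)) (ℓ : ℕ),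
        G ≤ strongProd (SimpleGraph.pathGraph m₁) (SimpleGraph.pathGraph m₂) ∧
        matchingNumber {e : Set (Fin m₁ × Fin m₂) | ∃ v, e = G.gBall v ℓ} = 1 ∧
        k ≤ 2 * transversalNumber {e : Set (Fin m₁ × Fin m₂) | ∃ v, e = G.gBall v ℓ} := by
  refine ⟨?_, fun k _ => ?_⟩
  · rintro ⟨f, hf⟩
    obtain ⟨m₁, m₂, G, ℓ, hG, hν, hτ⟩ :=
      exists_matchingNumber_eq_one_and_le_transversalNumber (f 1 + 1)
    have hle := hf m₁ m₂ G hG _ (isBallHypergraph_ballHypergraph G ℓ)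
    rw [hν] at hle
    omega
  · obtain ⟨m₁, m₂, G, ℓ, hG, hν, hτ⟩ := exists_matchingNumber_eq_one_and_le_transversalNumber k
    exact ⟨m₁, m₂, G, ℓ, hG, hν, hτ.trans (Nat.le_mul_of_pos_left _ two_pos)⟩
end
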